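/- arXiv:1412.4259 — 2 statements merged into one kernel-verified Lean document; each statement's English description precedes it below -/
import Mathlib

section
/- There exists a constant c ∈ ℕ such that for every 2-VASS V = (Q,T), every state q ∈ Q, and every linear path scheme ρ from q to q over V, there exists a finite set R_ρ of zigzag-free linear path schemes from q to q over V such that: (i) δ(ρ) ⊆ ⋃_{σ∈R_ρ} δ(σ); (ii) every σ ∈ R_ρ has length at most (|ρ| + ‖T‖)^c; and (iii) every σ ∈ R_ρ has at most two cycles. -/
namespace VASS

/-- Integer vectors of dimension `d`. -/
abbrev Vec (d : ℕ) := Fin d → ℤ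

/-- A transition of a `d`-VASS: source state, update vector, target state. -/
abbrev Trans (d : ℕ) := ℕ × Vec d × ℕ

/-- The norm of a vector: maximum of absolute values of its components. -/
def vnorm {d : ℕ} (z : Vec d) : ℕ := Finset.univ.sup fun i => (z i).natAbs

/-- The norm of a transition set. -/
def tnorm {d : ℕ} (T : Finset (Trans d)) : ℕ := T.sup fun t => vnorm t.2.1

/-- The displacement of a word of transitions. -/
def disp {d : ℕ} (π : List (Trans d)) : Vec d := (π.map fun t => t.2.1).sum

/-- `IsPathFrom p q π` : `π` is a path from `p` to `q`. -/
def IsPathFrom {d : ℕ} : ℕ → ℕ → List (Trans d) → Prop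
  | p, q, [] => p = q
  | p, q, t :: rest => t.1 = p ∧ IsPathFrom t.2.2 q rest

/-- ℕ^d as a subset of ℤ^d. -/
def NatSet (d : ℕ) : Set (Vec d) := {v | ∀ i, 0 ≤ v i}

/-- `p(u) →^π_A q(v)`. -/
def Run {d : ℕ} (T : Finset (Trans d)) (A : Set (Vec d)) (p : ℕ) (u : Vec d)
    (q : ℕ) (v : Vec d) (π : List (Trans d)) : Prop :=
  (∀ t ∈ π, t ∈ T) ∧ IsPathFrom p q π ∧ u ∈ A ∧ v = u + disp π ∧
    ∀ i, 1 ≤ i → i ≤ π.length → u + disp (π.take i) ∈ A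

/-- `p(u) →*_A q(v)`. -/
def Reach {d : ℕ} (T : Finset (Trans d)) (A : Set (Vec d)) (p : ℕ) (u : Vec d)
    (q : ℕ) (v : Vec d) : Prop := ∃ π, Run T A p u q v π

/-- A linear path scheme `α₀ β₁* α₁ ⋯ β_k* α_k`, presented as the initial
segment `α₀` together with the list of pairs `(βᵢ, αᵢ)`. -/
abbrev LPS (d : ℕ) := List (Trans d) × List (List (Trans d) × List (Trans d))

/-- The underlying word `α₀ β₁ α₁ ⋯ β_k α_k` of a linear path scheme. -/
def lpsSupport {d : ℕ} (ρ : LPS d) : List (Trans d) :=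
  ρ.1 ++ (ρ.2.map fun s => s.1 ++ s.2).flatten

/-- The length of a linear path scheme. -/
def lpsLen {d : ℕ} (ρ : LPS d) : ℕ := (lpsSupport ρ).length

/-- The number of cycles of a linear path scheme. -/
def numCycles {d : ℕ} (ρ : LPS d) : ℕ := ρ.2.length

/-- `ρ` is a linear path scheme from `p` to `q` over the transition set `T`:
its underlying word uses transitions from `T` and is a path from `p` to `q`,
and each `βᵢ` is a cycle. -/
def IsLPSFrom {d : ℕ} (T : Finset (Trans d)) (p q : ℕ) (ρ : LPS d) : Prop :=
  (∀ t ∈ lpsSupport ρ, t ∈ T) ∧ IsPathFrom p q (lpsSupport ρ) ∧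
    ∀ s ∈ ρ.2, s.1 ≠ [] ∧ ∃ r, IsPathFrom r r s.1

/-- The word `α₀ β₁^{e₁} α₁ ⋯ β_k^{e_k} α_k` of a linear path scheme. -/
def lpsWord {d : ℕ} (ρ : LPS d) (e : List ℕ) : List (Trans d) :=
  ρ.1 ++ (List.zipWith (fun s n => (List.replicate n s.1).flatten ++ s.2) ρ.2 e).flatten

/-- Membership in the language of a linear path scheme. -/
def InLang {d : ℕ} (ρ : LPS d) (π : List (Trans d)) : Prop :=
  ∃ e : List ℕ, e.length = numCycles ρ ∧ π = lpsWord ρ e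

/-- `p(u) →^S_A q(v)` for a finite set `S` of linear path schemes. -/
def SReach {d : ℕ} (T : Finset (Trans d)) (S : Finset (LPS d)) (A : Set (Vec d))
    (p : ℕ) (u : Vec d) (q : ℕ) (v : Vec d) : Prop :=
  ∃ ρ ∈ S, ∃ π, InLang ρ π ∧ Run T A p u q v π

/-- δ(ρ): the set of displacements of words in the language of `ρ`. -/
def DispSet {d : ℕ} (ρ : LPS d) : Set (Vec d) := {z | ∃ π, InLang ρ π ∧ z = disp π}

/-- A quadrant of ℤ². -/
def IsQuadrant (Z : Set (Vec 2)) : Prop :=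
  ∃ ε : Fin 2 → Bool, Z = {v | ∀ i, if ε i then 0 ≤ v i else v i ≤ 0}

/-- A linear path scheme is zigzag-free if the displacements of all its cycles
lie in a single quadrant. -/
def ZigzagFree (ρ : LPS 2) : Prop :=
  ∃ Z, IsQuadrant Z ∧ ∀ s ∈ ρ.2, disp s.1 ∈ Z

/-!
Among all multiplicities of the cycles of `ρ` that produce a given displacement, the
lexicographically least ones are small except on one cycle or on two cycles whose displacements
`x`, `y` are linearly independent. The small ones are unrolled into the closed walk at `q`.

If `x` and `y` lie in no common quadrant, let `w` be the displacement of `α₀α₁⋯α_k`. Cramer's rule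
gives `m w = α x + β y` with `m ≥ 1` and polynomially bounded coefficients. Hence going around `m`
times, with extra copies of the two cycles, realises every combination `a x + b y` with large `a`
and `b` by a cycle at `q`. Some of these combinations lie on the coordinate axes, so the axes cut
the cone spanned by `x` and `y` into subcones that are generated by displacements of cycles and
stay inside a quadrant; two cycles suffice for each of them.
-/

/-- `W` is a path from `p` to `q` all of whose transitions belong to `T`. -/
def IsWalk {d : ℕ} (T : Finset (Trans d)) (p q : ℕ) (W : List (Trans d)) : Prop :=
  (∀ t ∈ W, t ∈ T) ∧ IsPathFrom p q W

/-- The states visited by a path `W` that starts in `p`. -/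
def states {d : ℕ} (p : ℕ) (W : List (Trans d)) : List ℕ := p :: W.map fun t => t.2.2

/-- A closed walk at `q` over `T` that visits every state of `P`, so that cycles based in `P` can
be inserted into it. -/
structure IsTour {d : ℕ} (T : Finset (Trans d)) (q : ℕ) (P : Set ℕ) (W : List (Trans d)) :
    Prop where
  isWalk : IsWalk T q q W
  mem_states : ∀ r ∈ P, r ∈ states q W

/-- A nonempty cycle over `T` based at some state of `P`. -/
structure IsCycleAt {d : ℕ} (T : Finset (Trans d)) (P : Set ℕ) (X : List (Trans d)) : Prop where
  ne_nil : X ≠ []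
  exists_isWalk : ∃ r ∈ P, IsWalk T r r X

section Walks

variable {d : ℕ} {T : Finset (Trans d)} {p q r : ℕ} {P : Set ℕ} {A B W X Y : List (Trans d)}

lemma isWalk_nil : IsWalk T p q [] ↔ p = q := by
  simp [IsWalk, IsPathFrom]

lemma isWalk_cons {t : Trans d} :
    IsWalk T p q (t :: W) ↔ t ∈ T ∧ t.1 = p ∧ IsWalk T t.2.2 q W := by
  simp only [IsWalk, IsPathFrom, List.forall_mem_cons]
  tauto

lemma isWalk_append : IsWalk T p q (A ++ B) ↔ ∃ r, IsWalk T p r A ∧ IsWalk T r q B := by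
  induction A generalizing p with
  | nil => simp [isWalk_nil]
  | cons t A ih => simp [isWalk_cons, ih, and_assoc]

lemma IsWalk.append (hA : IsWalk T p r A) (hB : IsWalk T r q B) : IsWalk T p q (A ++ B) :=
  isWalk_append.2 ⟨r, hA, hB⟩

lemma IsWalk.flatten_replicate (hX : IsWalk T r r X) (n : ℕ) :
    IsWalk T r r (List.replicate n X).flatten := by
  induction n with
  | zero => simp [isWalk_nil]
  | succ n ih => simpa only [List.replicate_succ, List.flatten_cons] using hX.append ih

lemma IsWalk.endpoints_eq_of_isPathFrom {r' : ℕ} (hW : IsWalk T p q W) (hne : W ≠ [])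
    (h : IsPathFrom r r' W) : p = r ∧ q = r' := by
  induction W generalizing p r with
  | nil => exact absurd rfl hne
  | cons t W ih =>
    obtain ⟨-, hp, htail⟩ := isWalk_cons.1 hW
    refine ⟨hp.symm.trans h.1, ?_⟩
    rcases eq_or_ne W [] with rfl | hne
    · exact (isWalk_nil.1 htail).symm.trans h.2
    · exact (ih htail hne h.2).2

lemma IsWalk.end_mem_states (hW : IsWalk T p q W) : q ∈ states p W := by
  induction W generalizing p with
  | nil => simp [states, isWalk_nil.1 hW]
  | cons t W ih => exact List.mem_cons_of_mem _ (ih (isWalk_cons.1 hW).2.2)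

lemma IsWalk.mem_states_append {u : ℕ} (hA : IsWalk T p r A) :
    u ∈ states p (A ++ B) ↔ u ∈ states p A ∨ u ∈ states r B := by
  have hr : u = r → u ∈ states p A := fun h => h ▸ hA.end_mem_states
  simp only [states, List.mem_cons, List.map_append, List.mem_append] at hr ⊢
  tauto

lemma IsWalk.exists_split (hW : IsWalk T p q W) (hr : r ∈ states p W) :
    ∃ A Z, W = A ++ Z ∧ IsWalk T p r A ∧ IsWalk T r q Z := by
  induction W generalizing p with
  | nil =>
    obtain rfl : r = p := by simpa [states] using hr
    exact ⟨[], [], rfl, isWalk_nil.2 rfl, hW⟩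
  | cons t W ih =>
    rcases List.mem_cons.1 hr with rfl | hr
    · exact ⟨[], t :: W, rfl, isWalk_nil.2 rfl, hW⟩
    · obtain ⟨ht, hp, hW⟩ := isWalk_cons.1 hW
      obtain ⟨A, Z, rfl, hA, hZ⟩ := ih hW hr
      exact ⟨t :: A, Z, rfl, isWalk_cons.2 ⟨ht, hp, hA⟩, hZ⟩

lemma IsWalk.exists_split_two {r' : ℕ} (hW : IsWalk T p q W) (hr : r ∈ states p W)
    (hr' : r' ∈ states p W) :
    ∃ A B C, W = A ++ B ++ C ∧
      (IsWalk T p r A ∧ IsWalk T r r' B ∧ IsWalk T r' q C ∨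
        IsWalk T p r' A ∧ IsWalk T r' r B ∧ IsWalk T r q C) := by
  obtain ⟨A, Z, rfl, hA, hZ⟩ := hW.exists_split hr
  rcases hA.mem_states_append.1 hr' with hmem | hmem
  · obtain ⟨A, B, rfl, hA, hB⟩ := hA.exists_split hmem
    exact ⟨A, B, Z, rfl, .inr ⟨hA, hB, hZ⟩⟩
  · obtain ⟨B, C, rfl, hB, hC⟩ := hZ.exists_split hmem
    exact ⟨A, B, C, (List.append_assoc ..).symm, .inl ⟨hA, hB, hC⟩⟩

lemma disp_append (A B : List (Trans d)) : disp (A ++ B) = disp A + disp B := by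
  simp [disp]

lemma disp_flatten_replicate (X : List (Trans d)) (n : ℕ) :
    disp (List.replicate n X).flatten = n • disp X := by
  induction n with
  | zero => simp [disp]
  | succ n ih => rw [List.replicate_succ, List.flatten_cons, disp_append, ih, succ_nsmul']

lemma abs_apply_le_tnorm {t : Trans d} (ht : t ∈ T) (i : Fin d) : |t.2.1 i| ≤ tnorm T := by
  have hcoord : (t.2.1 i).natAbs ≤ vnorm t.2.1 :=
    Finset.le_sup (f := fun i => (t.2.1 i).natAbs) (Finset.mem_univ i)
  have hnorm : vnorm t.2.1 ≤ tnorm T := Finset.le_sup (f := fun t : Trans d => vnorm t.2.1) ht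
  rw [Int.abs_eq_natAbs]
  exact_mod_cast hcoord.trans hnorm

lemma abs_disp_le (hW : ∀ t ∈ W, t ∈ T) (i : Fin d) : |disp W i| ≤ W.length * tnorm T := by
  induction W with
  | nil => simp [disp]
  | cons t W ih =>
    obtain ⟨ht, hW⟩ := List.forall_mem_cons.1 hW
    calc |disp (t :: W) i| = |t.2.1 i + disp W i| := by simp [disp]
      _ ≤ |t.2.1 i| + |disp W i| := abs_add_le _ _
      _ ≤ tnorm T + W.length * tnorm T := add_le_add (abs_apply_le_tnorm ht i) (ih hW)
      _ = (t :: W).length * tnorm T := by push_cast [List.length_cons]; ring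

lemma abs_disp_le_sq {n : ℕ} (hW : ∀ t ∈ W, t ∈ T) (hlen : W.length ≤ n)
    (i : Fin d) : |disp W i| ≤ ((n + tnorm T) ^ 2 : ℕ) :=
  calc |disp W i| ≤ W.length * tnorm T := abs_disp_le hW i
    _ ≤ ((n + tnorm T) ^ 2 : ℕ) := by
      norm_cast
      rw [sq]
      exact Nat.mul_le_mul (by omega) (by omega)

lemma IsTour.exists_pump (hW : IsTour T q P W) (hX : IsCycleAt T P X) (n : ℕ) :
    ∃ W', IsTour T q P W' ∧ disp W' = disp W + n • disp X ∧
      W'.length = W.length + n * X.length := by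
  obtain ⟨r, hr, hXr⟩ := hX.exists_isWalk
  obtain ⟨A, Z, rfl, hA, hZ⟩ := hW.isWalk.exists_split (hW.mem_states r hr)
  have hAX := hA.append (hXr.flatten_replicate n)
  refine ⟨A ++ (List.replicate n X).flatten ++ Z,
    ⟨hAX.append hZ, fun u hu => hAX.mem_states_append.2 ?_⟩, ?_, ?_⟩
  · exact (hA.mem_states_append.1 (hW.mem_states u hu)).imp_left
      fun h => hA.mem_states_append.2 (.inl h)
  · simp only [disp_append, disp_flatten_replicate]
    abel
  · simp only [List.length_append, List.length_flatten, List.map_replicate, List.sum_replicate,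
      smul_eq_mul]
    ring

lemma IsTour.exists_pump_sum {ι : Type*} {X : ι → List (Trans d)} (hW : IsTour T q P W)
    (hX : ∀ l, IsCycleAt T P (X l)) (e : ι → ℕ) (s : Finset ι) :
    ∃ W', IsTour T q P W' ∧ disp W' = disp W + ∑ l ∈ s, e l • disp (X l) ∧
      W'.length = W.length + ∑ l ∈ s, e l * (X l).length := by
  classical
  induction s using Finset.induction_on with
  | empty => exact ⟨W, hW, by simp, by simp⟩
  | insert a s ha ih =>
    obtain ⟨W₁, hW₁, hdisp₁, hlen₁⟩ := ih
    obtain ⟨W₂, hW₂, hdisp₂, hlen₂⟩ := hW₁.exists_pump (hX a) (e a)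
    refine ⟨W₂, hW₂, ?_, ?_⟩
    · rw [hdisp₂, hdisp₁, Finset.sum_insert ha]
      abel
    · rw [hlen₂, hlen₁, Finset.sum_insert ha]
      ring

/-- Concatenate `m` copies of `W` and pump `X` and `Y` in one of them; the relation turns the
displacement of the copies into a correction of the multiplicities of `X` and `Y`. -/
lemma IsTour.exists_loop_of_nsmul_disp_eq (hW : IsTour T q P W) (hX : IsCycleAt T P X)
    (hY : IsCycleAt T P Y) {m : ℕ} (hm : 1 ≤ m) {α β : ℤ}
    (hrel : m • disp W = α • disp X + β • disp Y) {a b : ℕ} (ha : α < a) (hb : β ≤ b) :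
    ∃ D, D ≠ [] ∧ IsWalk T q q D ∧ disp D = a • disp X + b • disp Y ∧
      (D.length : ℤ) = m * W.length + (a - α) * X.length + (b - β) * Y.length := by
  obtain ⟨m, rfl⟩ := Nat.exists_eq_add_of_le' hm
  lift (a : ℤ) - α to ℕ using by omega with i hi
  lift (b : ℤ) - β to ℕ using by omega with j hj
  obtain ⟨W₁, hW₁, hdisp₁, hlen₁⟩ := hW.exists_pump hX i
  obtain ⟨W₂, hW₂, hdisp₂, hlen₂⟩ := hW₁.exists_pump hY j
  refine ⟨W₂ ++ (List.replicate m W).flatten, ?_,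
    hW₂.isWalk.append (hW.isWalk.flatten_replicate m), ?_, ?_⟩
  · have hpos : 0 < i * X.length :=
      Nat.mul_pos (by omega) (List.length_pos_iff.2 hX.ne_nil)
    exact List.append_ne_nil_of_left_ne_nil (List.ne_nil_of_length_pos (by omega)) _
  · have hij : (i : ℤ) = a - α ∧ (j : ℤ) = b - β := ⟨hi, hj⟩
    calc disp (W₂ ++ (List.replicate m W).flatten)
        = (m + 1) • disp W + i • disp X + j • disp Y := by
          rw [disp_append, disp_flatten_replicate, hdisp₂, hdisp₁]; module
      _ = a • disp X + b • disp Y := by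
          rw [hrel, ← natCast_zsmul _ i, ← natCast_zsmul _ j, hij.1, hij.2]; module
  · simp only [List.length_append, List.length_flatten, List.map_replicate, List.sum_replicate,
      smul_eq_mul, hlen₂, hlen₁]
    push_cast
    ring

end Walks

/-- The word `α₀α₁⋯α_k` of a linear path scheme, in which every cycle is skipped. -/
def skeleton {d : ℕ} (ρ : LPS d) : List (Trans d) := ρ.1 ++ (ρ.2.map Prod.snd).flatten

section LinearPathSchemes

variable {d : ℕ} {T : Finset (Trans d)} {p q : ℕ} {A : List (Trans d)}
  {s : List (Trans d) × List (Trans d)} {L : List (List (Trans d) × List (Trans d))} {ρ : LPS d}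

lemma isLPSFrom_iff_isWalk :
    IsLPSFrom T p q ρ ↔
      IsWalk T p q (lpsSupport ρ) ∧ ∀ s ∈ ρ.2, s.1 ≠ [] ∧ ∃ r, IsPathFrom r r s.1 :=
  and_assoc.symm

lemma isLPSFrom_nil : IsLPSFrom T p q (A, []) ↔ IsWalk T p q A := by
  simp [IsLPSFrom, lpsSupport, IsWalk]

lemma lpsSupport_cons : lpsSupport (A, s :: L) = A ++ s.1 ++ lpsSupport (s.2, L) := by
  simp [lpsSupport]

lemma skeleton_cons : skeleton (A, s :: L) = A ++ skeleton (s.2, L) := by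
  simp [skeleton]

lemma lpsWord_cons {n : ℕ} {e : List ℕ} :
    lpsWord (A, s :: L) (n :: e)
      = A ++ (List.replicate n s.1).flatten ++ lpsWord (s.2, L) e := by
  simp [lpsWord]

lemma isLPSFrom_cons :
    IsLPSFrom T p q (A, s :: L) ↔
      ∃ r, IsWalk T p r A ∧ s.1 ≠ [] ∧ IsWalk T r r s.1 ∧ IsLPSFrom T r q (s.2, L) := by
  simp only [isLPSFrom_iff_isWalk, lpsSupport_cons, List.forall_mem_cons]
  constructor
  · rintro ⟨hwalk, ⟨hne, r, hr⟩, hL⟩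
    obtain ⟨r₂, hAX, hZ⟩ := isWalk_append.1 hwalk
    obtain ⟨r₁, hA, hX⟩ := isWalk_append.1 hAX
    obtain ⟨rfl, rfl⟩ := hX.endpoints_eq_of_isPathFrom hne hr
    exact ⟨_, hA, hne, hX, hZ, hL⟩
  · rintro ⟨r, hA, hne, hX, hZ, hL⟩
    exact ⟨(hA.append hX).append hZ, ⟨hne, r, hX.2⟩, hL⟩

lemma IsLPSFrom.isWalk_skeleton (hρ : IsLPSFrom T p q ρ) : IsWalk T p q (skeleton ρ) := by
  obtain ⟨A, L⟩ := ρ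
  induction L generalizing A p with
  | nil => simpa [skeleton] using isLPSFrom_nil.1 hρ
  | cons s L ih =>
    obtain ⟨r, hA, -, -, hL⟩ := isLPSFrom_cons.1 hρ
    simpa only [skeleton_cons] using hA.append (ih _ hL)

lemma IsLPSFrom.isTour_skeleton (hρ : IsLPSFrom T q q ρ) :
    IsTour T q {r | r ∈ states q (skeleton ρ)} (skeleton ρ) :=
  ⟨hρ.isWalk_skeleton, fun _ hr => hr⟩

lemma IsLPSFrom.isCycleAt_states_skeleton (hρ : IsLPSFrom T p q ρ) :
    ∀ s ∈ ρ.2, IsCycleAt T {r | r ∈ states p (skeleton ρ)} s.1 := by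
  obtain ⟨A, L⟩ := ρ
  induction L generalizing A p with
  | nil => simp
  | cons s L ih =>
    obtain ⟨r, hA, hne, hX, hL⟩ := isLPSFrom_cons.1 hρ
    have hsub : ∀ u ∈ states r (skeleton (s.2, L)), u ∈ states p (skeleton (A, s :: L)) :=
      fun u hu => by simpa only [skeleton_cons] using hA.mem_states_append.2 (.inr hu)
    refine List.forall_mem_cons.2 ⟨⟨hne, r, hsub r List.mem_cons_self, hX⟩, fun s' hs' => ?_⟩
    obtain ⟨hne', u, hu, hX'⟩ := ih _ hL s' hs'
    exact ⟨hne', u, hsub u hu, hX'⟩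

lemma lpsLen_eq_length_skeleton_add (ρ : LPS d) :
    lpsLen ρ = (skeleton ρ).length + ∑ l : Fin ρ.2.length, (ρ.2.get l).1.length := by
  obtain ⟨A, L⟩ := ρ
  induction L generalizing A with
  | nil => simp [lpsLen, lpsSupport, skeleton]
  | cons s L ih =>
    have hsum : ∑ l : Fin (s :: L).length, ((s :: L).get l).1.length
        = s.1.length + ∑ l : Fin L.length, (L.get l).1.length := Fin.sum_univ_succ _
    simp only [lpsLen, lpsSupport_cons, skeleton_cons, List.length_append] at ih ⊢
    rw [ih, hsum]
    ring

lemma length_skeleton_le_lpsLen (ρ : LPS d) : (skeleton ρ).length ≤ lpsLen ρ := by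
  rw [lpsLen_eq_length_skeleton_add]
  exact Nat.le_add_right _ _

lemma sum_length_get_le_lpsLen (ρ : LPS d) :
    ∑ l : Fin ρ.2.length, (ρ.2.get l).1.length ≤ lpsLen ρ := by
  rw [lpsLen_eq_length_skeleton_add]
  exact Nat.le_add_left _ _

lemma length_get_le_lpsLen (ρ : LPS d) (l : Fin ρ.2.length) :
    (ρ.2.get l).1.length ≤ lpsLen ρ :=
  (Finset.single_le_sum (f := fun l => (ρ.2.get l).1.length) (fun _ _ => Nat.zero_le _)
    (Finset.mem_univ l)).trans (sum_length_get_le_lpsLen ρ)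

lemma IsLPSFrom.numCycles_le_lpsLen (hρ : IsLPSFrom T p q ρ) : numCycles ρ ≤ lpsLen ρ :=
  calc numCycles ρ = ∑ _l : Fin ρ.2.length, 1 := by simp [numCycles]
    _ ≤ ∑ l : Fin ρ.2.length, (ρ.2.get l).1.length :=
      Finset.sum_le_sum fun l _ => List.length_pos_iff.2 (hρ.2.2 _ (List.get_mem _ l)).1
    _ ≤ lpsLen ρ := sum_length_get_le_lpsLen ρ

lemma exists_disp_lpsWord_eq (ρ : LPS d) {e : List ℕ} (he : e.length = numCycles ρ) :
    ∃ f : Fin ρ.2.length → ℕ,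
      disp (lpsWord ρ e) = disp (skeleton ρ) + ∑ l, f l • disp (ρ.2.get l).1 := by
  obtain ⟨A, L⟩ := ρ
  induction L generalizing A e with
  | nil => exact ⟨fun _ => 0, by simp [lpsWord, skeleton]⟩
  | cons s L ih =>
    obtain _ | ⟨n, e⟩ := e
    · simp [numCycles] at he
    obtain ⟨f, hf⟩ := ih s.2 (by simpa [numCycles] using he)
    refine ⟨Fin.cons n f, ?_⟩
    have hsum : ∑ l : Fin (s :: L).length, (Fin.cons n f : Fin (L.length + 1) → ℕ) l •
        disp ((s :: L).get l).1 = n • disp s.1 + ∑ l, f l • disp (L.get l).1 :=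
      Fin.sum_univ_succ _
    calc disp (lpsWord (A, s :: L) (n :: e))
        = disp (skeleton (A, s :: L)) + (n • disp s.1 + ∑ l, f l • disp (L.get l).1) := by
          rw [lpsWord_cons, skeleton_cons, disp_append, disp_append, disp_append,
            disp_flatten_replicate, hf]
          abel
      _ = _ := congrArg _ hsum.symm

lemma finite_setOf_list_length_le {α : Type*} {s : Set α} (hs : s.Finite) (n : ℕ) :
    {l : List α | (∀ a ∈ l, a ∈ s) ∧ l.length ≤ n}.Finite := by
  have := hs.to_subtype
  refine ((List.finite_length_le s n).image (List.map Subtype.val)).subset ?_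
  rintro l ⟨hl, hn⟩
  lift l to List s using hl
  exact Set.mem_image_of_mem _ (by simpa using hn)

lemma finite_setOf_isLPSFrom_lpsLen_le (T : Finset (Trans d)) (p q n : ℕ) :
    {ρ : LPS d | IsLPSFrom T p q ρ ∧ lpsLen ρ ≤ n}.Finite := by
  have hwords := finite_setOf_list_length_le T.finite_toSet n
  refine (hwords.prod (finite_setOf_list_length_le (hwords.prod hwords) n)).subset ?_
  rintro ρ ⟨hρ, hn⟩
  have hword : ∀ B : List (Trans d), B.Sublist (lpsSupport ρ) →
      (∀ t ∈ B, t ∈ T) ∧ B.length ≤ n := fun B hB =>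
    ⟨fun t ht => hρ.1 t (hB.subset ht), hB.length_le.trans hn⟩
  refine ⟨hword _ (List.sublist_append_left ..), fun s hs => ?_, hρ.numCycles_le_lpsLen.trans hn⟩
  have hsub : (s.1 ++ s.2).Sublist (lpsSupport ρ) :=
    (List.sublist_flatten_of_mem (List.mem_map_of_mem (f := fun s => s.1 ++ s.2) hs)).trans
      (List.sublist_append_right ..)
  exact ⟨hword _ ((List.sublist_append_left ..).trans hsub),
    hword _ ((List.sublist_append_right ..).trans hsub)⟩

end LinearPathSchemes

/-- The determinant of the `2 × 2` matrix with columns `x` and `y`. -/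
def det (x y : Vec 2) : ℤ := x 0 * y 1 - x 1 * y 0

section Determinant

variable {x y : Vec 2} {M : ℕ}

lemma det_smul_add_det_smul_add_det_smul (x y z : Vec 2) :
    det y z • x + det z x • y + det x y • z = 0 := by
  funext i
  fin_cases i <;> simp [det] <;> ring

lemma smul_sub_smul_eq_zero_of_det_eq_zero (h : det x y = 0) (k : Fin 2) :
    y k • x - x k • y = 0 := by
  unfold det at h
  funext i
  fin_cases k <;> fin_cases i <;> simp <;> linarith

lemma abs_det_le (hx : ∀ i, |x i| ≤ M) (hy : ∀ i, |y i| ≤ M) : |det x y| ≤ 2 * M ^ 2 := by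
  have hmul : ∀ i j, |x i * y j| ≤ (M : ℤ) * M := fun i j => by
    rw [abs_mul]
    exact mul_le_mul (hx i) (hy j) (abs_nonneg _) (Int.natCast_nonneg M)
  calc |det x y| ≤ |x 0 * y 1| + |x 1 * y 0| := abs_sub _ _
    _ ≤ M * M + M * M := add_le_add (hmul 0 1) (hmul 1 0)
    _ = 2 * M ^ 2 := by ring

lemma exists_nsmul_eq_of_det_ne_zero {w : Vec 2} (hdet : det x y ≠ 0) (hw : ∀ i, |w i| ≤ M)
    (hx : ∀ i, |x i| ≤ M) (hy : ∀ i, |y i| ≤ M) :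
    ∃ (m : ℕ) (α β : ℤ), 1 ≤ m ∧ m ≤ 2 * M ^ 2 ∧ |α| ≤ 2 * M ^ 2 ∧ |β| ≤ 2 * M ^ 2 ∧
      m • w = α • x + β • y := by
  have hsign : |(det x y).sign| = 1 := Int.abs_sign_of_ne_zero hdet
  have hm : ((det x y).natAbs : ℤ) ≤ 2 * M ^ 2 := Int.abs_eq_natAbs _ ▸ abs_det_le hx hy
  refine ⟨(det x y).natAbs, (det x y).sign * det w y, (det x y).sign * det x w,
    Int.natAbs_pos.2 hdet, by exact_mod_cast hm, ?_, ?_, ?_⟩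
  · rw [abs_mul, hsign, one_mul]
    exact abs_det_le hw hy
  · rw [abs_mul, hsign, one_mul]
    exact abs_det_le hx hw
  · have hcramer : det x y • w = det w y • x + det x w • y := by
      funext i
      fin_cases i <;> simp [det] <;> ring
    rw [← natCast_zsmul, ← Int.sign_mul_self_eq_natAbs, mul_smul, hcramer, smul_add, mul_smul,
      mul_smul]

end Determinant

/-- The multiplicities `e` admit no nontrivial exchange along an integer relation between the
vectors `v l` with coefficients bounded by `e`. -/
def IsRigid {ι G : Type*} [Fintype ι] [AddCommGroup G] (v : ι → G) (e : ι → ℕ) : Prop :=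
  ∀ d : ι → ℤ, (∀ l, |d l| ≤ e l) → ∑ l, d l • v l = 0 → d = 0

section Rigidity

/-- The lexicographically least multiplicities are rigid: of `e + d` and `e - d`, one is smaller. -/
lemma exists_isRigid_sum_eq {ι G : Type*} [Fintype ι] [LinearOrder ι] [AddCommGroup G]
    (v : ι → G) (e : ι → ℕ) :
    ∃ e' : ι → ℕ, ∑ l, e' l • v l = ∑ l, e l • v l ∧ IsRigid v e' := by
  obtain ⟨m, hm, hmin⟩ := (wellFounded_lt (α := Lex (ι → ℕ))).has_min
    {f | ∑ l, ofLex f l • v l = ∑ l, e l • v l} ⟨toLex e, rfl⟩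
  have not_neg : ∀ d : ι → ℤ, (∀ l, |d l| ≤ ofLex m l) → ∑ l, d l • v l = 0 →
      ¬ toLex d < 0 := by
    rintro d hd hsum ⟨i, heq, hlt⟩
    have hcast : ∀ l, (((ofLex m l : ℤ) + d l).toNat : ℤ) = ofLex m l + d l := fun l =>
      Int.toNat_of_nonneg (by linarith [neg_le_of_abs_le (hd l)])
    refine hmin (toLex fun l => ((ofLex m l : ℤ) + d l).toNat) ?_ ⟨i, fun l hl => ?_, ?_⟩
    · refine Eq.trans ?_ hm
      calc ∑ l, ((ofLex m l : ℤ) + d l).toNat • v l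
          = ∑ l, (ofLex m l • v l + d l • v l) := Finset.sum_congr rfl fun l _ => by
            rw [← natCast_zsmul, hcast, add_smul, natCast_zsmul]
        _ = ∑ l, ofLex m l • v l := by rw [Finset.sum_add_distrib, hsum, add_zero]
    · have : d l = 0 := heq l hl
      simp [this]
    · have hneg : d i < 0 := hlt
      have := hcast i
      change ((ofLex m i : ℤ) + d i).toNat < ofLex m i
      omega
  refine ⟨ofLex m, hm, fun d hd hsum => ?_⟩
  rcases lt_trichotomy (toLex d) 0 with h | h | h
  · exact absurd h (not_neg d hd hsum)
  · exact h
  · exact absurd (neg_lt_zero.2 h) (not_neg (-d) (by simpa using hd) (by simpa using hsum))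

lemma IsRigid.comp_injective {ι κ G : Type*} [Fintype ι] [Fintype κ] [AddCommGroup G]
    {v : ι → G} {e : ι → ℕ} (h : IsRigid v e) {f : κ → ι} (hf : f.Injective) :
    IsRigid (v ∘ f) (e ∘ f) := by
  classical
  intro d hd hsum
  have hext : Function.extend f d 0 = 0 := by
    refine h _ (fun l => ?_) ?_
    · by_cases hl : ∃ a, f a = l
      · obtain ⟨a, rfl⟩ := hl
        simpa [hf.extend_apply] using hd a
      · simp [Function.extend_apply' _ _ _ hl]
    · rw [← hsum]
      refine (Fintype.sum_of_injective f hf _ _ (fun l hl => ?_) fun a => ?_).symm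
      · simp [Function.extend_apply' _ _ _ (by simpa using hl)]
      · simp [hf.extend_apply]
  funext a
  simpa [hf.extend_apply] using congrFun hext (f a)

variable {M : ℕ}

lemma IsRigid.det_ne_zero {v : Fin 2 → Vec 2} {e : Fin 2 → ℕ} (h : IsRigid v e)
    (hv : ∀ l i, |v l i| ≤ M) (he : ∀ l, 2 * M ^ 2 < e l) : det (v 0) (v 1) ≠ 0 := by
  have hM : ∀ l, (M : ℤ) ≤ e l := fun l => by
    have := he l
    have : M ≤ e l := by nlinarith
    exact_mod_cast this
  have hone : ∀ l, (1 : ℤ) ≤ e l := fun l => by exact_mod_cast (Nat.zero_le _).trans_lt (he l)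
  intro hdet
  have hv0 : v 0 = 0 := by
    funext k
    have hd := h ![v 1 k, -v 0 k]
      (Fin.forall_fin_two.2 ⟨(hv 1 k).trans (hM 0), by simpa using (hv 0 k).trans (hM 1)⟩)
      (by simpa [Fin.sum_univ_two, ← sub_eq_add_neg]
        using smul_sub_smul_eq_zero_of_det_eq_zero hdet k)
    simpa using congrFun hd 1
  have hd := h ![1, 0] (Fin.forall_fin_two.2 ⟨by simpa using hone 0, by simp⟩)
    (by simp [Fin.sum_univ_two, hv0])
  simpa using congrFun hd 0

lemma IsRigid.exists_le_of_fin_three {v : Fin 3 → Vec 2} {e : Fin 3 → ℕ} (h : IsRigid v e)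
    (hv : ∀ l i, |v l i| ≤ M) : ∃ l, e l ≤ 2 * M ^ 2 := by
  by_contra! he
  have hbound : ∀ i j l, |det (v i) (v j)| ≤ (e l : ℤ) := fun i j l =>
    (abs_det_le (hv i) (hv j)).trans (by exact_mod_cast (he l).le)
  have hd := h ![det (v 1) (v 2), det (v 2) (v 0), det (v 0) (v 1)]
    (by intro l; fin_cases l <;> exact hbound _ _ _)
    (by simpa [Fin.sum_univ_three] using det_smul_add_det_smul_add_det_smul (v 0) (v 1) (v 2))
  have hpair := h.comp_injective (f := ![0, 1]) (by decide)
  exact hpair.det_ne_zero (fun l => hv _) (fun l => he _) (by simpa using congrFun hd 2)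

lemma exists_sum_eq_and_small_off_pair {ι : Type*} [Fintype ι] [LinearOrder ι] [Nonempty ι]
    {v : ι → Vec 2} (hv : ∀ l i, |v l i| ≤ M) (e : ι → ℕ) :
    ∃ e' : ι → ℕ, ∑ l, e' l • v l = ∑ l, e l • v l ∧
      ∃ i j, (i = j ∨ det (v i) (v j) ≠ 0) ∧ ∀ l, l ≠ i → l ≠ j → e' l ≤ 2 * M ^ 2 := by
  obtain ⟨e', hsum, hrigid⟩ := exists_isRigid_sum_eq v e
  refine ⟨e', hsum, ?_⟩
  by_cases hone : ∃ i, ∀ l, l ≠ i → e' l ≤ 2 * M ^ 2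
  · obtain ⟨i, hi⟩ := hone
    exact ⟨i, i, .inl rfl, fun l hl _ => hi l hl⟩
  push Not at hone
  obtain ⟨i, -, hi⟩ := hone (Classical.arbitrary ι)
  obtain ⟨j, hji, hj⟩ := hone i
  have hpair := hrigid.comp_injective (f := ![i, j]) (by
    intro a b; fin_cases a <;> fin_cases b <;> simp [hji, hji.symm])
  refine ⟨i, j, .inr (hpair.det_ne_zero (fun l => hv _) (Fin.forall_fin_two.2 ⟨hi, hj⟩)),
    fun l hli hlj => ?_⟩
  have htriple := hrigid.comp_injective (f := ![i, j, l]) (by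
    intro a b; fin_cases a <;> fin_cases b <;> simp [hji, hji.symm, hli, hli.symm, hlj, hlj.symm])
  obtain ⟨a, ha⟩ := htriple.exists_le_of_fin_three fun l => hv _
  fin_cases a
  · exact absurd ha hi.not_ge
  · exact absurd ha hj.not_ge
  · exact ha

end Rigidity

/-- The coordinates in which `x` and `y` have strictly opposite signs. -/
def signClashes {d : ℕ} (x y : Vec d) : Finset (Fin d) :=
  Finset.univ.filter fun i => x i * y i < 0

section SignClashes

variable {d : ℕ} {x y : Vec d} {k : Fin d}

lemma mem_signClashes : k ∈ signClashes x y ↔ x k * y k < 0 := by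
  simp [signClashes]

lemma one_le_natAbs_of_mem_signClashes (hk : k ∈ signClashes x y) :
    1 ≤ (x k).natAbs ∧ 1 ≤ (y k).natAbs := by
  have hne := (mem_signClashes.1 hk).ne
  exact ⟨Int.natAbs_pos.2 (left_ne_zero_of_mul hne), Int.natAbs_pos.2 (right_ne_zero_of_mul hne)⟩

lemma signClashes_self (x : Vec d) : signClashes x x = ∅ := by
  simp [signClashes, mul_self_nonneg]

lemma signClashes_comm (x y : Vec d) : signClashes x y = signClashes y x := by
  simp only [signClashes, mul_comm]

lemma signClashes_left_nsmul_add_nsmul_subset (x y : Vec d) (a b : ℕ) :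
    signClashes x (a • x + b • y) ⊆ signClashes x y := by
  intro k hk
  rw [mem_signClashes] at hk ⊢
  by_contra! hxy
  have hnonneg : 0 ≤ (a : ℤ) * (x k * x k) + b * (x k * y k) :=
    add_nonneg (mul_nonneg a.cast_nonneg (mul_self_nonneg _)) (mul_nonneg b.cast_nonneg hxy)
  have heq : x k * (a • x + b • y) k = a * (x k * x k) + b * (x k * y k) := by
    simp only [Pi.add_apply, Pi.smul_apply, Int.nsmul_eq_mul]
    ring
  exact hk.not_ge (heq ▸ hnonneg)

lemma natAbs_nsmul_add_natAbs_nsmul_apply_eq_zero (hk : k ∈ signClashes x y) :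
    ((y k).natAbs • x + (x k).natAbs • y) k = 0 := by
  simp only [Pi.add_apply, Pi.smul_apply, Int.nsmul_eq_mul, Int.natCast_natAbs]
  rcases mul_neg_iff.1 (mem_signClashes.1 hk) with ⟨hx, hy⟩ | ⟨hx, hy⟩
  · rw [abs_of_pos hx, abs_of_neg hy]
    ring
  · rw [abs_of_neg hx, abs_of_pos hy]
    ring

lemma card_signClashes_lt_of_apply_eq_zero {a b : ℕ} (hk : k ∈ signClashes x y)
    (hzero : (a • x + b • y) k = 0) :
    (signClashes x (a • x + b • y)).card < (signClashes x y).card := by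
  refine Finset.card_lt_card ((Finset.ssubset_iff_of_subset
    (signClashes_left_nsmul_add_nsmul_subset x y a b)).2 ⟨k, hk, ?_⟩)
  rw [mem_signClashes, hzero, mul_zero]
  exact lt_irrefl 0

lemma exists_isQuadrant_of_signClashes_eq_empty {x y : Vec 2} (h : signClashes x y = ∅) :
    ∃ Z, IsQuadrant Z ∧ x ∈ Z ∧ y ∈ Z := by
  have hnonneg : ∀ i, 0 ≤ x i * y i := fun i => by
    by_contra! hi
    exact Finset.notMem_empty i (h ▸ mem_signClashes.2 hi)
  refine ⟨_, ⟨fun i => decide (0 ≤ x i ∧ 0 ≤ y i), rfl⟩, fun i => ?_, fun i => ?_⟩ <;>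
  · by_cases hi : 0 ≤ x i ∧ 0 ≤ y i
    · simp [hi]
    · have := mul_nonneg_iff.1 (hnonneg i)
      simp only [hi, decide_false, Bool.false_eq_true, if_false]
      tauto

end SignClashes

/-- The combination `g.1 • x + g.2 • y`, as a function of the pair `g` of multiplicities. -/
def comb {d : ℕ} (x y : Vec d) : ℕ × ℕ →+ Vec d :=
  AddMonoidHom.coprod (multiplesHom _ x) (multiplesHom _ y)

/-- The pairs of multiplicities `g` for which `comb x y g` will be the displacement of a cycle:
the two unit vectors and all pairs with sufficiently large entries. -/
def IsGenerator (K : ℕ) (g : ℕ × ℕ) : Prop :=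
  g = (1, 0) ∨ g = (0, 1) ∨ K ≤ g.1 ∧ K ≤ g.2

/-- Two generators, jointly using both `x` and `y`, with entries bounded in terms of `U`. The
factor `L` makes the bound pass from `U` to `U ^ 2` in each step of the cone splitting. -/
structure IsGeneratorPair (K L U : ℕ) (g h : ℕ × ℕ) : Prop where
  left : IsGenerator K g
  right : IsGenerator K h
  one_le_fst : 1 ≤ g.1 + h.1
  one_le_snd : 1 ≤ g.2 + h.2
  left_le : L * (g.1 + g.2) ≤ U
  right_le : L * (h.1 + h.2) ≤ U

section ConeSplitting

variable {d : ℕ} {x y : Vec d} {K L U M : ℕ} {g h : ℕ × ℕ}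

lemma comb_apply (x y : Vec d) (g : ℕ × ℕ) : comb x y g = g.1 • x + g.2 • y := rfl

lemma natAbs_comb_apply_le (hx : ∀ i, |x i| ≤ M) (hy : ∀ i, |y i| ≤ M) (g : ℕ × ℕ) (i : Fin d) :
    (comb x y g i).natAbs ≤ M * (g.1 + g.2) := by
  zify
  calc |comb x y g i| = |g.1 * x i + g.2 * y i| := by simp [comb_apply]
    _ ≤ g.1 * |x i| + g.2 * |y i| := by
      simpa only [abs_mul, Nat.abs_cast] using abs_add_le (g.1 * x i) (g.2 * y i)
    _ ≤ g.1 * M + g.2 * M := by gcongr <;> apply_assumption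
    _ = M * (g.1 + g.2) := by ring

lemma isGeneratorPair_unit (K L : ℕ) : IsGeneratorPair K L L (1, 0) (0, 1) :=
  ⟨.inl rfl, .inr (.inl rfl), by simp, by simp, by simp, by simp⟩

lemma IsGeneratorPair.symm (hgh : IsGeneratorPair K L U g h) : IsGeneratorPair K L U h g :=
  ⟨hgh.right, hgh.left, by linarith [hgh.one_le_fst], by linarith [hgh.one_le_snd],
    hgh.right_le, hgh.left_le⟩

lemma IsGeneratorPair.mono {U' : ℕ} (hgh : IsGeneratorPair K L U g h) (hU : U ≤ U') :
    IsGeneratorPair K L U' g h :=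
  { hgh with left_le := hgh.left_le.trans hU, right_le := hgh.right_le.trans hU }

lemma exists_eq_mul_add_and_lt {a b : ℕ} (ha : 1 ≤ a) (hb : 1 ≤ b) (s t : ℕ) :
    ∃ n s' t', s = n * a + s' ∧ t = n * b + t' ∧ (s' < a ∨ t' < b) := by
  wlog hle : s / a ≤ t / b generalizing s t a b
  · obtain ⟨n, t', s', ht, hs, hlt⟩ := this hb ha t s (le_of_not_ge hle)
    exact ⟨n, s', t', hs, ht, hlt.symm⟩
  have hmul : s / a * b ≤ t := (Nat.mul_le_mul_right b hle).trans (Nat.div_mul_le_self t b)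
  exact ⟨s / a, s % a, t - s / a * b, (Nat.div_add_mod' s a).symm, by omega,
    .inl (Nat.mod_lt s ha)⟩

/-- The combination of `g` and `h` that vanishes in coordinate `k`, scaled to be a generator. -/
def axisGenerator (x y : Vec d) (K : ℕ) (k : Fin d) (g h : ℕ × ℕ) : ℕ × ℕ :=
  (K * (comb x y h k).natAbs) • g + (K * (comb x y g k).natAbs) • h

lemma comb_axisGenerator_apply_eq_zero {k : Fin d}
    (hk : k ∈ signClashes (comb x y g) (comb x y h)) :
    comb x y (axisGenerator x y K k g h) k = 0 := by
  simp only [axisGenerator, map_add, map_nsmul, mul_smul, ← nsmul_add, Pi.smul_apply,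
    natAbs_nsmul_add_natAbs_nsmul_apply_eq_zero hk, nsmul_zero]

lemma card_signClashes_axisGenerator_lt {k : Fin d}
    (hk : k ∈ signClashes (comb x y g) (comb x y h)) :
    (signClashes (comb x y g) (comb x y (axisGenerator x y K k g h))).card
      < (signClashes (comb x y g) (comb x y h)).card := by
  have hzero := comb_axisGenerator_apply_eq_zero (K := K) hk
  simp only [axisGenerator, map_add, map_nsmul] at hzero ⊢
  exact card_signClashes_lt_of_apply_eq_zero hk hzero

lemma IsGeneratorPair.two_mul_mul_natAbs_mul_le (hx : ∀ i, |x i| ≤ M) (hy : ∀ i, |y i| ≤ M)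
    (hgh : IsGeneratorPair K (2 * K * M) U g h) (k : Fin d) :
    2 * (2 * K * M * (K * (comb x y h k).natAbs * (g.1 + g.2))) ≤ U ^ 2 :=
  calc 2 * (2 * K * M * (K * (comb x y h k).natAbs * (g.1 + g.2)))
      ≤ 2 * (2 * K * M * (K * (M * (h.1 + h.2)) * (g.1 + g.2))) := by
        gcongr
        exact natAbs_comb_apply_le hx hy h k
    _ = 2 * K * M * (g.1 + g.2) * (2 * K * M * (h.1 + h.2)) := by ring
    _ ≤ U * U := Nat.mul_le_mul hgh.left_le hgh.right_le
    _ = U ^ 2 := (sq U).symm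

lemma IsGeneratorPair.pair_axisGenerator (hx : ∀ i, |x i| ≤ M) (hy : ∀ i, |y i| ≤ M) (hK : 1 ≤ K)
    (hgh : IsGeneratorPair K (2 * K * M) U g h) {k : Fin d}
    (hk : k ∈ signClashes (comb x y g) (comb x y h)) :
    IsGeneratorPair K (2 * K * M) (U ^ 2) g (axisGenerator x y K k g h) := by
  obtain ⟨hg, hh⟩ := one_le_natAbs_of_mem_signClashes hk
  have hbound := hgh.two_mul_mul_natAbs_mul_le hx hy k
  have hbound' := hgh.symm.two_mul_mul_natAbs_mul_le hx hy k
  have hlarge : ∀ i j : ℕ, 1 ≤ i + j →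
      K ≤ K * (comb x y h k).natAbs * i + K * (comb x y g k).natAbs * j := fun i j hij =>
    calc K ≤ K * (i + j) := Nat.le_mul_of_pos_right K hij
      _ = K * 1 * i + K * 1 * j := by ring
      _ ≤ _ := by gcongr
  have hfst : K ≤ (axisGenerator x y K k g h).1 := hlarge _ _ hgh.one_le_fst
  have hsnd : K ≤ (axisGenerator x y K k g h).2 := hlarge _ _ hgh.one_le_snd
  refine ⟨hgh.left, .inr (.inr ⟨hfst, hsnd⟩), by omega, by omega,
    hgh.left_le.trans (Nat.le_self_pow two_ne_zero U), ?_⟩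
  simp only [axisGenerator, Prod.fst_add, Prod.snd_add, Prod.smul_fst, Prod.smul_snd,
    smul_eq_mul]
  linarith

/-- The axis through a clashing coordinate cuts the cone of `g` and `h` into two subcones, both
with fewer clashes. -/
lemma IsGeneratorPair.exists_subcone (hx : ∀ i, |x i| ≤ M) (hy : ∀ i, |y i| ≤ M) (hK : 1 ≤ K)
    (hgh : IsGeneratorPair K (2 * K * M) U g h) {k : Fin d}
    (hk : k ∈ signClashes (comb x y g) (comb x y h)) (s t : ℕ) :
    ∃ (g' h' r : ℕ × ℕ) (s' t' : ℕ), IsGeneratorPair K (2 * K * M) (U ^ 2) g' h' ∧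
      (signClashes (comb x y g') (comb x y h')).card
        < (signClashes (comb x y g) (comb x y h)).card ∧
      2 * K * M * (r.1 + r.2) ≤ U ^ 2 ∧ s • g + t • h = r + (s' • g' + t' • h') := by
  obtain ⟨hg, hh⟩ := one_le_natAbs_of_mem_signClashes hk
  obtain ⟨n, s', t', rfl, rfl, hlt⟩ := exists_eq_mul_add_and_lt (Nat.mul_pos hK hh)
    (Nat.mul_pos hK hg) s t
  have hremainder : ∀ {g h : ℕ × ℕ} {m : ℕ}, IsGeneratorPair K (2 * K * M) U g h →
      m < K * (comb x y h k).natAbs → 2 * K * M * ((m • g).1 + (m • g).2) ≤ U ^ 2 :=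
    fun {g h m} hgh hm =>
    calc 2 * K * M * ((m • g).1 + (m • g).2) = 2 * K * M * (m * (g.1 + g.2)) := by
          simp only [Prod.smul_fst, Prod.smul_snd, smul_eq_mul]
          ring
      _ ≤ 2 * K * M * (K * (comb x y h k).natAbs * (g.1 + g.2)) := by gcongr
      _ ≤ U ^ 2 := by have := hgh.two_mul_mul_natAbs_mul_le hx hy k; omega
  rcases hlt with hlt | hlt
  · have hk' := signClashes_comm (comb x y g) _ ▸ hk
    refine ⟨h, axisGenerator x y K k h g, s' • g, t', n, hgh.symm.pair_axisGenerator hx hy hK hk',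
      ?_, hremainder hgh hlt, ?_⟩
    · rw [signClashes_comm (comb x y g)]
      exact card_signClashes_axisGenerator_lt hk'
    · rw [axisGenerator]
      module
  · refine ⟨g, axisGenerator x y K k g h, t' • h, s', n, hgh.pair_axisGenerator hx hy hK hk,
      card_signClashes_axisGenerator_lt hk, hremainder hgh.symm hlt, ?_⟩
    rw [axisGenerator]
    module

lemma IsGeneratorPair.exists_clash_free_subcone (hx : ∀ i, |x i| ≤ M) (hy : ∀ i, |y i| ≤ M)
    (hK : 1 ≤ K) (hgh : IsGeneratorPair K (2 * K * M) U g h) {n : ℕ}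
    (hn : (signClashes (comb x y g) (comb x y h)).card ≤ n) (s t : ℕ) :
    ∃ (g' h' r : ℕ × ℕ) (s' t' : ℕ), IsGeneratorPair K (2 * K * M) (U ^ 2 ^ n) g' h' ∧
      signClashes (comb x y g') (comb x y h') = ∅ ∧
      2 * K * M * (r.1 + r.2) ≤ n * U ^ 2 ^ n ∧ s • g + t • h = r + (s' • g' + t' • h') := by
  induction n generalizing U g h s t with
  | zero =>
    exact ⟨g, h, 0, s, t, by simpa using hgh, Finset.card_eq_zero.1 (Nat.le_zero.1 hn), by simp,
      (zero_add _).symm⟩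
  | succ n ih =>
    rcases Finset.eq_empty_or_nonempty (signClashes (comb x y g) (comb x y h)) with
      hempty | ⟨k, hk⟩
    · exact ⟨g, h, 0, s, t, hgh.mono (Nat.le_self_pow (by positivity) U), hempty, by simp,
        (zero_add _).symm⟩
    obtain ⟨g₁, h₁, r₁, s₁, t₁, hpair₁, hcard, hr₁, heq₁⟩ := hgh.exists_subcone hx hy hK hk s t
    obtain ⟨g₂, h₂, r₂, s₂, t₂, hpair₂, hempty, hr₂, heq₂⟩ := ih hpair₁ (by omega) s₁ t₁
    have hpow : (U ^ 2) ^ 2 ^ n = U ^ 2 ^ (n + 1) := by rw [← pow_mul, pow_succ']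
    have hU : U ^ 2 ≤ U ^ 2 ^ (n + 1) := hpow ▸ Nat.le_self_pow (by positivity) (U ^ 2)
    rw [hpow] at hpair₂ hr₂
    refine ⟨g₂, h₂, r₁ + r₂, s₂, t₂, hpair₂, hempty, ?_, by rw [heq₁, heq₂, add_assoc]⟩
    simp only [Prod.fst_add, Prod.snd_add]
    linarith

end ConeSplitting

/-- The zigzag-free linear path schemes from `q` to `q` of length at most `ℓ` with at most two
cycles. -/
def simpleSchemes (T : Finset (Trans 2)) (q ℓ : ℕ) : Set (LPS 2) :=
  {σ | IsLPSFrom T q q σ ∧ ZigzagFree σ ∧ lpsLen σ ≤ ℓ ∧ numCycles σ ≤ 2}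

section SimpleSchemes

variable {T : Finset (Trans 2)} {q : ℕ} {P : Set ℕ} {W₀ W X Y : List (Trans 2)} {ρ : LPS 2}

lemma finite_simpleSchemes (T : Finset (Trans 2)) (q ℓ : ℕ) : (simpleSchemes T q ℓ).Finite :=
  (finite_setOf_isLPSFrom_lpsLen_le T q q ℓ).subset fun _ hσ => ⟨hσ.1, hσ.2.2.1⟩

lemma simpleSchemes_mono {ℓ ℓ' : ℕ} (h : ℓ ≤ ℓ') : simpleSchemes T q ℓ ⊆ simpleSchemes T q ℓ' :=
  fun _ ⟨hσ, hzigzag, hlen, hcycles⟩ => ⟨hσ, hzigzag, hlen.trans h, hcycles⟩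

lemma zigzagFree_of_numCycles_le_one (hρ : numCycles ρ ≤ 1) : ZigzagFree ρ := by
  obtain ⟨A, _ | ⟨s, _ | ⟨s', L⟩⟩⟩ := ρ
  · obtain ⟨Z, hZ, -⟩ := exists_isQuadrant_of_signClashes_eq_empty (signClashes_self (0 : Vec 2))
    exact ⟨Z, hZ, by simp⟩
  · obtain ⟨Z, hZ, hs, -⟩ := exists_isQuadrant_of_signClashes_eq_empty (signClashes_self (disp s.1))
    exact ⟨Z, hZ, by simpa using hs⟩
  · simp [numCycles] at hρ

lemma pair_mem_simpleSchemes {r r' : ℕ} {A B C : List (Trans 2)} (hA : IsWalk T q r A)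
    (hX : IsWalk T r r X) (hXne : X ≠ []) (hB : IsWalk T r r' B) (hY : IsWalk T r' r' Y)
    (hYne : Y ≠ []) (hC : IsWalk T r' q C) (hclash : signClashes (disp X) (disp Y) = ∅) :
    (A, [(X, B), (Y, C)]) ∈
      simpleSchemes T q ((A ++ B ++ C).length + X.length + Y.length) := by
  refine ⟨isLPSFrom_cons.2 ⟨r, hA, hXne, hX,
    isLPSFrom_cons.2 ⟨r', hB, hYne, hY, isLPSFrom_nil.2 hC⟩⟩, ?_, ?_, le_rfl⟩
  · obtain ⟨Z, hZ, hXZ, hYZ⟩ := exists_isQuadrant_of_signClashes_eq_empty hclash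
    exact ⟨Z, hZ, by simpa using ⟨hXZ, hYZ⟩⟩
  · simp only [lpsLen, lpsSupport, List.map_cons, List.map_nil, List.flatten_cons,
      List.flatten_nil, List.length_append, List.length_nil]
    omega

lemma disp_add_nsmul_add_nsmul_mem_dispSet {d : ℕ} (A B C X Y : List (Trans d)) (s t : ℕ) :
    disp (A ++ B ++ C) + s • disp X + t • disp Y ∈ DispSet (A, [(X, B), (Y, C)]) := by
  refine ⟨_, ⟨[s, t], rfl, rfl⟩, ?_⟩
  simp only [lpsWord, List.zipWith_cons_cons, List.zipWith_nil_left, List.flatten_cons,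
    List.flatten_nil, List.append_nil, disp_append, disp_flatten_replicate]
  abel

lemma IsTour.exists_mem_simpleSchemes_of_signClashes_eq_empty (hW : IsTour T q P W)
    (hX : IsCycleAt T P X) (hY : IsCycleAt T P Y)
    (hclash : signClashes (disp X) (disp Y) = ∅) (s t : ℕ) :
    ∃ σ ∈ simpleSchemes T q (W.length + X.length + Y.length),
      disp W + s • disp X + t • disp Y ∈ DispSet σ := by
  obtain ⟨hXne, r, hr, hX⟩ := hX
  obtain ⟨hYne, r', hr', hY⟩ := hY
  obtain ⟨A, B, C, rfl, ⟨hA, hB, hC⟩ | ⟨hA, hB, hC⟩⟩ :=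
    hW.isWalk.exists_split_two (hW.mem_states r hr) (hW.mem_states r' hr')
  · exact ⟨_, pair_mem_simpleSchemes hA hX hXne hB hY hYne hC hclash,
      disp_add_nsmul_add_nsmul_mem_dispSet A B C X Y s t⟩
  · rw [signClashes_comm] at hclash
    rw [add_right_comm (A ++ B ++ C).length, add_right_comm (disp (A ++ B ++ C))]
    exact ⟨_, pair_mem_simpleSchemes hA hY hYne hB hX hXne hC hclash,
      disp_add_nsmul_add_nsmul_mem_dispSet A B C Y X t s⟩

lemma IsTour.exists_isCycleAt_comb {M N : ℕ} {g : ℕ × ℕ} (hW : IsTour T q P W)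
    (hX : IsCycleAt T P X) (hY : IsCycleAt T P Y) (hq : q ∈ P)
    (hdet : det (disp X) (disp Y) ≠ 0) (hlen : ∀ Z ∈ [W, X, Y], Z.length ≤ N)
    (hdisp : ∀ Z ∈ [W, X, Y], ∀ i, |disp Z i| ≤ M) (hg : IsGenerator (2 * M ^ 2 + 1) g) :
    ∃ D, IsCycleAt T P D ∧ disp D = comb (disp X) (disp Y) g ∧
      D.length ≤ 4 * N * (g.1 + g.2) := by
  have hWlen := hlen W (by simp)
  have hXlen := hlen X (by simp)
  have hYlen := hlen Y (by simp)
  rcases hg with rfl | rfl | ⟨hK₁, hK₂⟩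
  · exact ⟨X, hX, by simp [comb_apply], by omega⟩
  · exact ⟨Y, hY, by simp [comb_apply], by omega⟩
  obtain ⟨m, α, β, hm, hmM, hα, hβ, hrel⟩ := exists_nsmul_eq_of_det_ne_zero hdet
    (hdisp W (by simp)) (hdisp X (by simp)) (hdisp Y (by simp))
  rw [abs_le] at hα hβ
  zify at hK₁ hK₂ hmM hWlen hXlen hYlen
  obtain ⟨D, hne, hD, hdispD, hlenD⟩ := hW.exists_loop_of_nsmul_disp_eq hX hY hm hrel
    (a := g.1) (b := g.2) (by linarith) (by linarith)
  refine ⟨D, ⟨hne, q, hq, hD⟩, hdispD, ?_⟩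
  zify
  calc (D.length : ℤ)
      = m * W.length + (g.1 - α) * X.length + (g.2 - β) * Y.length := hlenD
    _ ≤ m * N + (g.1 - α) * N + (g.2 - β) * N := by
      gcongr <;> linarith
    _ = (m + (g.1 - α) + (g.2 - β)) * N := by ring
    _ ≤ (4 * (g.1 + g.2)) * N := by gcongr; linarith
    _ = 4 * N * (g.1 + g.2) := by ring

lemma IsTour.exists_clash_free_cycles {M N : ℕ} (hM : 1 ≤ M) (hW : IsTour T q P W)
    (hX : IsCycleAt T P X) (hY : IsCycleAt T P Y) (hq : q ∈ P)
    (hdet : det (disp X) (disp Y) ≠ 0) (hlen : ∀ Z ∈ [W, X, Y], Z.length ≤ N)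
    (hdisp : ∀ Z ∈ [W, X, Y], ∀ i, |disp Z i| ≤ M) (s t : ℕ) :
    ∃ (G H : List (Trans 2)) (a b s' t' : ℕ), IsCycleAt T P G ∧ IsCycleAt T P H ∧
      signClashes (disp G) (disp H) = ∅ ∧
      a * N + b * N + G.length + H.length ≤ 10 * N * (2 * (2 * M ^ 2 + 1) * M) ^ 4 ∧
      s • disp X + t • disp Y = a • disp X + b • disp Y + (s' • disp G + t' • disp H) := by
  obtain ⟨g, h, r, s', t', hgh, hclash, hr, heq⟩ :=
    (isGeneratorPair_unit (2 * M ^ 2 + 1) (2 * (2 * M ^ 2 + 1) * M)).exists_clash_free_subcone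
      (hdisp X (by simp)) (hdisp Y (by simp)) (Nat.le_add_left 1 _)
      ((Finset.card_le_univ _).trans_eq (Fintype.card_fin 2)) s t
  obtain ⟨G, hG, hdispG, hlenG⟩ := hW.exists_isCycleAt_comb hX hY hq hdet hlen hdisp hgh.left
  obtain ⟨H, hH, hdispH, hlenH⟩ := hW.exists_isCycleAt_comb hX hY hq hdet hlen hdisp hgh.right
  refine ⟨G, H, r.1, r.2, s', t', hG, hH, by rwa [hdispG, hdispH], ?_, ?_⟩
  · set L := 2 * (2 * M ^ 2 + 1) * M
    have hL : 0 < L := by positivity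
    have hg := (Nat.le_mul_of_pos_left (g.1 + g.2) hL).trans hgh.left_le
    have hh := (Nat.le_mul_of_pos_left (h.1 + h.2) hL).trans hgh.right_le
    have hr := (Nat.le_mul_of_pos_left (r.1 + r.2) hL).trans hr
    calc r.1 * N + r.2 * N + G.length + H.length
        ≤ r.1 * N + r.2 * N + 4 * N * (g.1 + g.2) + 4 * N * (h.1 + h.2) := by gcongr
      _ = N * (r.1 + r.2 + 4 * (g.1 + g.2) + 4 * (h.1 + h.2)) := by ring
      _ ≤ N * (10 * L ^ 2 ^ 2) := by gcongr; omega
      _ = 10 * N * L ^ 4 := by ring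
  · have hcomb := congrArg (comb (disp X) (disp Y)) heq
    simpa only [map_add, map_nsmul, ← hdispG, ← hdispH, comb_apply, one_nsmul, zero_nsmul,
      add_zero, zero_add] using hcomb

lemma IsTour.exists_mem_simpleSchemes_of_det_ne_zero {M N : ℕ} (hM : 1 ≤ M)
    (hW₀ : IsTour T q P W₀) (hX : IsCycleAt T P X) (hY : IsCycleAt T P Y) (hq : q ∈ P)
    (hdet : det (disp X) (disp Y) ≠ 0) (hlen : ∀ Z ∈ [W₀, X, Y], Z.length ≤ N)
    (hdisp : ∀ Z ∈ [W₀, X, Y], ∀ i, |disp Z i| ≤ M) (hW : IsTour T q P W) (s t : ℕ) :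
    ∃ σ ∈ simpleSchemes T q (W.length + 10 * N * (2 * (2 * M ^ 2 + 1) * M) ^ 4),
      disp W + s • disp X + t • disp Y ∈ DispSet σ := by
  obtain ⟨G, H, a, b, s', t', hG, hH, hclash, hbound, heq⟩ :=
    hW₀.exists_clash_free_cycles hM hX hY hq hdet hlen hdisp s t
  obtain ⟨W₁, hW₁, hdisp₁, hlen₁⟩ := hW.exists_pump hX a
  obtain ⟨W₂, hW₂, hdisp₂, hlen₂⟩ := hW₁.exists_pump hY b
  obtain ⟨σ, hσ, hmem⟩ :=
    hW₂.exists_mem_simpleSchemes_of_signClashes_eq_empty hG hH hclash s' t'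
  refine ⟨σ, simpleSchemes_mono ?_ hσ, ?_⟩
  · have hXlen : a * X.length ≤ a * N := Nat.mul_le_mul_left a (hlen X (by simp))
    have hYlen : b * Y.length ≤ b * N := Nat.mul_le_mul_left b (hlen Y (by simp))
    omega
  · convert hmem using 1
    rw [hdisp₂, hdisp₁, add_assoc, heq]
    abel

end SimpleSchemes

section Reduction

variable {T : Finset (Trans 2)} {q : ℕ} {ρ : LPS 2} {z : Vec 2}

lemma IsLPSFrom.abs_disp_skeleton_le (hρ : IsLPSFrom T q q ρ) (i : Fin 2) :
    |disp (skeleton ρ) i| ≤ ((lpsLen ρ + tnorm T) ^ 2 : ℕ) :=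
  abs_disp_le_sq hρ.isWalk_skeleton.1 (length_skeleton_le_lpsLen ρ) i

lemma IsLPSFrom.abs_disp_get_le (hρ : IsLPSFrom T q q ρ) (l : Fin ρ.2.length) (i : Fin 2) :
    |disp (ρ.2.get l).1 i| ≤ ((lpsLen ρ + tnorm T) ^ 2 : ℕ) := by
  obtain ⟨-, r, -, hwalk⟩ := hρ.isCycleAt_states_skeleton _ (List.get_mem ρ.2 l)
  exact abs_disp_le_sq hwalk.1 (length_get_le_lpsLen ρ l) i

lemma exists_sum_pair_eq {ι G : Type*} [DecidableEq ι] [AddCommMonoid G] (v : ι → G)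
    (e : ι → ℕ) (i j : ι) :
    ∃ s t : ℕ, ∑ l ∈ {i, j}, e l • v l = s • v i + t • v j := by
  rcases eq_or_ne i j with rfl | hij
  · exact ⟨e i, 0, by simp⟩
  · exact ⟨e i, e j, Finset.sum_pair hij⟩

lemma IsLPSFrom.exists_tour_of_mem_dispSet (hρ : IsLPSFrom T q q ρ) (hcycles : 1 ≤ numCycles ρ)
    (hz : z ∈ DispSet ρ) :
    ∃ (W : List (Trans 2)) (i j : Fin ρ.2.length) (s t : ℕ),
      IsTour T q {r | r ∈ states q (skeleton ρ)} W ∧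
      W.length ≤ lpsLen ρ * (2 * (lpsLen ρ + tnorm T) ^ 4 + 1) ∧
      (i = j ∨ det (disp (ρ.2.get i).1) (disp (ρ.2.get j).1) ≠ 0) ∧
      z = disp W + s • disp (ρ.2.get i).1 + t • disp (ρ.2.get j).1 := by
  obtain ⟨_, ⟨e, he, rfl⟩, rfl⟩ := hz
  obtain ⟨f, hf⟩ := exists_disp_lpsWord_eq ρ he
  have : Nonempty (Fin ρ.2.length) := ⟨⟨0, hcycles⟩⟩
  obtain ⟨e', hsum, i, j, hij, hsmall⟩ := exists_sum_eq_and_small_off_pair hρ.abs_disp_get_le f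
  obtain ⟨W, hW, hdisp, hlen⟩ := hρ.isTour_skeleton.exists_pump_sum
    (fun l => hρ.isCycleAt_states_skeleton _ (List.get_mem ρ.2 l)) e' {i, j}ᶜ
  obtain ⟨s, t, hst⟩ := exists_sum_pair_eq (fun l => disp (ρ.2.get l).1) e' i j
  refine ⟨W, i, j, s, t, hW, ?_, hij, ?_⟩
  · set N := lpsLen ρ + tnorm T
    have hoff : ∀ l ∈ ({i, j}ᶜ : Finset _), e' l ≤ 2 * N ^ 4 := fun l hl => by
      simp only [Finset.mem_compl, Finset.mem_insert, Finset.mem_singleton, not_or] at hl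
      simpa only [← pow_mul] using hsmall l hl.1 hl.2
    calc W.length
        ≤ (skeleton ρ).length + ∑ l, 2 * N ^ 4 * (ρ.2.get l).1.length := by
          rw [hlen]
          gcongr
          exact (Finset.sum_le_sum fun l hl => Nat.mul_le_mul_right _ (hoff l hl)).trans
            (Finset.sum_le_sum_of_subset (Finset.subset_univ _))
      _ ≤ lpsLen ρ + 2 * N ^ 4 * lpsLen ρ := by
          rw [← Finset.mul_sum]
          gcongr
          exacts [length_skeleton_le_lpsLen ρ, sum_length_get_le_lpsLen ρ]
      _ = lpsLen ρ * (2 * N ^ 4 + 1) := by ring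
  · rw [hf, ← hsum, ← Finset.sum_compl_add_sum {i, j}, hst, hdisp]
    abel

lemma length_bound_le_pow {N : ℕ} (hN : 2 ≤ N) :
    N * (2 * N ^ 4 + 1) + 10 * N * (2 * (2 * (N ^ 2) ^ 2 + 1) * N ^ 2) ^ 4 ≤ N ^ 40 := by
  have hone : 1 ≤ N ^ 4 := Nat.one_le_pow _ _ (by omega)
  calc N * (2 * N ^ 4 + 1) + 10 * N * (2 * (2 * (N ^ 2) ^ 2 + 1) * N ^ 2) ^ 4
      ≤ N * (2 * N ^ 4 + N ^ 4) + 10 * N * (2 * (2 * (N ^ 2) ^ 2 + N ^ 4) * N ^ 2) ^ 4 := by gcongr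
    _ = 3 * N ^ 5 + 12960 * N ^ 25 := by ring
    _ ≤ 3 * N ^ 25 + 12960 * N ^ 25 := by gcongr <;> omega
    _ ≤ 2 ^ 15 * N ^ 25 := by linarith [Nat.zero_le (N ^ 25)]
    _ ≤ N ^ 15 * N ^ 25 := by gcongr
    _ = N ^ 40 := by ring

lemma IsLPSFrom.exists_mem_simpleSchemes (hρ : IsLPSFrom T q q ρ) (hz : z ∈ DispSet ρ) :
    ∃ σ ∈ simpleSchemes T q ((lpsLen ρ + tnorm T) ^ 40), z ∈ DispSet σ := by
  rcases le_or_gt (numCycles ρ) 1 with hone | htwo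
  · exact ⟨ρ, ⟨hρ, zigzagFree_of_numCycles_le_one hone,
      (Nat.le_add_right _ _).trans (Nat.le_self_pow (by norm_num) _), hone.trans one_le_two⟩, hz⟩
  obtain ⟨W, i, j, s, t, hW, hlenW, hij, rfl⟩ := hρ.exists_tour_of_mem_dispSet htwo.le hz
  set N := lpsLen ρ + tnorm T
  have hcycle := fun l => hρ.isCycleAt_states_skeleton _ (List.get_mem ρ.2 l)
  have hlen : ∀ l, (ρ.2.get l).1.length ≤ N := fun l =>
    (length_get_le_lpsLen ρ l).trans (Nat.le_add_right _ _)
  have hN : 2 ≤ N := (Nat.succ_le_of_lt htwo).trans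
    (hρ.numCycles_le_lpsLen.trans (Nat.le_add_right _ _))
  have hpow := length_bound_le_pow hN
  have hlenW : W.length ≤ N * (2 * N ^ 4 + 1) :=
    hlenW.trans (Nat.mul_le_mul_right _ (Nat.le_add_right _ (tnorm T)))
  rcases hij with rfl | hdet
  · obtain ⟨σ, hσ, hmem⟩ := hW.exists_mem_simpleSchemes_of_signClashes_eq_empty (hcycle i)
      (hcycle i) (signClashes_self _) s t
    have hpos : 0 < (2 * (2 * (N ^ 2) ^ 2 + 1) * N ^ 2) ^ 4 := by positivity
    have hle := Nat.le_mul_of_pos_right (10 * N) hpos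
    have hleni := hlen i
    exact ⟨σ, simpleSchemes_mono (by omega) hσ, hmem⟩
  · have hlens : ∀ Z ∈ [skeleton ρ, (ρ.2.get i).1, (ρ.2.get j).1], Z.length ≤ N := by
      simpa using ⟨(length_skeleton_le_lpsLen ρ).trans (Nat.le_add_right _ _), hlen i, hlen j⟩
    have hdisps : ∀ Z ∈ [skeleton ρ, (ρ.2.get i).1, (ρ.2.get j).1], ∀ k,
        |disp Z k| ≤ (N ^ 2 : ℕ) := by
      simpa only [List.forall_mem_cons] using
        ⟨hρ.abs_disp_skeleton_le, hρ.abs_disp_get_le i, hρ.abs_disp_get_le j, by simp⟩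
    obtain ⟨σ, hσ, hmem⟩ := hρ.isTour_skeleton.exists_mem_simpleSchemes_of_det_ne_zero
      (Nat.one_le_pow 2 N (one_le_two.trans hN)) (hcycle i) (hcycle j) List.mem_cons_self hdet
      hlens hdisps hW s t
    exact ⟨σ, simpleSchemes_mono (by omega) hσ, hmem⟩

end Reduction

/-- The displacements of a linear path scheme from `q` to `q`
in a 2-VASS are captured by finitely many zigzag-free linear path schemes from
`q` to `q`, of polynomial length and with at most two cycles each. -/
theorem statement7 :
    ∃ c : ℕ, ∀ (Q : Finset ℕ) (T : Finset (Trans 2)),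
      (∀ t ∈ T, t.1 ∈ Q ∧ t.2.2 ∈ Q) →
      ∀ q ∈ Q, ∀ ρ : LPS 2, IsLPSFrom T q q ρ →
      ∃ R : Finset (LPS 2),
        (∀ σ ∈ R, IsLPSFrom T q q σ ∧ ZigzagFree σ) ∧
        (DispSet ρ ⊆ ⋃ σ ∈ R, DispSet σ) ∧
        (∀ σ ∈ R, lpsLen σ ≤ (lpsLen ρ + tnorm T) ^ c) ∧
        (∀ σ ∈ R, numCycles σ ≤ 2) := by
  refine ⟨40, fun Q T _ q _ ρ hρ =>
    ⟨(finite_simpleSchemes T q ((lpsLen ρ + tnorm T) ^ 40)).toFinset, ?_, fun z hz => ?_, ?_, ?_⟩⟩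
  · exact fun σ hσ => ((Set.Finite.mem_toFinset _).1 hσ).imp_right And.left
  · obtain ⟨σ, hσ, hmem⟩ := hρ.exists_mem_simpleSchemes hz
    exact Set.mem_biUnion ((Set.Finite.mem_toFinset _).2 hσ) hmem
  · exact fun σ hσ => ((Set.Finite.mem_toFinset _).1 hσ).2.2.1
  · exact fun σ hσ => ((Set.Finite.mem_toFinset _).1 hσ).2.2.2

end VASS
end

section
/- There exists a constant c ∈ ℕ such that for every 1-VASS V = (Q,T) there exists a finite set Y of linear path schemes over V such that: (i) for all states p,q ∈ Q and all u,v ∈ ℕ, p(u) →*_ℕ q(v) holds if and only if p(u) →^Y_ℕ q(v) holds; (ii) every ρ ∈ Y has length at most (|Q| + ‖T‖)^c; and (iii) every ρ ∈ Y has at most one cycle. -/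
namespace VASS

/-- A transition of a 1-VASS: source state, integer update, target state. -/
abbrev Trans1 := ℕ × ℤ × ℕ

/-- The norm of a transition set of a 1-VASS. -/
def tnorm1 (T : Finset Trans1) : ℕ := T.sup fun t => t.2.1.natAbs

/-- The displacement of a word of transitions. -/
def disp1 (π : List Trans1) : ℤ := (π.map fun t => t.2.1).sum

/-- `IsPathFrom1 p q π` : `π` is a path from `p` to `q`. -/
def IsPathFrom1 : ℕ → ℕ → List Trans1 → Prop
  | p, q, [] => p = q
  | p, q, t :: rest => t.1 = p ∧ IsPathFrom1 t.2.2 q rest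

/-- ℕ as a subset of ℤ. -/
def NNeg : Set ℤ := {z | 0 ≤ z}

/-- `p(u) →^π_A q(v)` for a 1-VASS. -/
def Run1 (T : Finset Trans1) (A : Set ℤ) (p : ℕ) (u : ℤ) (q : ℕ) (v : ℤ)
    (π : List Trans1) : Prop :=
  (∀ t ∈ π, t ∈ T) ∧ IsPathFrom1 p q π ∧ u ∈ A ∧ v = u + disp1 π ∧
    ∀ i, 1 ≤ i → i ≤ π.length → u + disp1 (π.take i) ∈ A

/-- `p(u) →*_A q(v)` for a 1-VASS. -/
def Reach1 (T : Finset Trans1) (A : Set ℤ) (p : ℕ) (u : ℤ) (q : ℕ) (v : ℤ) : Prop :=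
  ∃ π, Run1 T A p u q v π

/-- A linear path scheme of a 1-VASS, presented as the initial segment `α₀`
together with the list of pairs `(βᵢ, αᵢ)`. -/
abbrev LPS1 := List Trans1 × List (List Trans1 × List Trans1)

/-- The underlying word `α₀ β₁ α₁ ⋯ β_k α_k` of a linear path scheme. -/
def lpsSupport1 (ρ : LPS1) : List Trans1 :=
  ρ.1 ++ (ρ.2.map fun s => s.1 ++ s.2).flatten

/-- The length of a linear path scheme. -/
def lpsLen1 (ρ : LPS1) : ℕ := (lpsSupport1 ρ).length

/-- The number of cycles of a linear path scheme. -/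
def numCycles1 (ρ : LPS1) : ℕ := ρ.2.length

/-- `ρ` is a linear path scheme from `p` to `q` over the transition set `T`. -/
def IsLPSFrom1 (T : Finset Trans1) (p q : ℕ) (ρ : LPS1) : Prop :=
  (∀ t ∈ lpsSupport1 ρ, t ∈ T) ∧ IsPathFrom1 p q (lpsSupport1 ρ) ∧
    ∀ s ∈ ρ.2, s.1 ≠ [] ∧ ∃ r, IsPathFrom1 r r s.1

/-- The word `α₀ β₁^{e₁} α₁ ⋯ β_k^{e_k} α_k` of a linear path scheme. -/
def lpsWord1 (ρ : LPS1) (e : List ℕ) : List Trans1 :=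
  ρ.1 ++ (List.zipWith (fun s n => (List.replicate n s.1).flatten ++ s.2) ρ.2 e).flatten

/-- Membership in the language of a linear path scheme. -/
def InLang1 (ρ : LPS1) (π : List Trans1) : Prop :=
  ∃ e : List ℕ, e.length = numCycles1 ρ ∧ π = lpsWord1 ρ e

/-- `p(u) →^Y_A q(v)` for a finite set `Y` of linear path schemes. -/
def SReach1 (T : Finset Trans1) (Y : Finset LPS1) (A : Set ℤ)
    (p : ℕ) (u : ℤ) (q : ℕ) (v : ℤ) : Prop :=
  ∃ ρ ∈ Y, ∃ π, InLang1 ρ π ∧ Run1 T A p u q v π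

/-!
Write `M = |Q| * ‖T‖`. In a run that climbs by more than `M * b`, pigeonhole on the states at the
last crossings of consecutive levels yields a loop that rises by a positive multiple of `b`.

* A shortest run never leaves the range of its endpoints by more than `M ^ 2`: on such an excursion,
  an ascending and a descending loop of opposite effects could be cut out together. Hence it visits
  few configurations, and runs between endpoints of similar height can be replaced by short ones.
* If a run climbs by more than `M`, it has a loop `β` near its starting height with effect
  `0 < b ≤ M`. As long as more than `M * b` remains to be climbed, a later loop rising by a multiple
  of `b` can be traded for iterations of `β`. What remains is a short prefix, a power of `β` and a
  short suffix.
* Descending runs are ascending runs of the reversed 1-VASS.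
-/

section Sequences

variable {σ : Type*} {Q : Finset σ} {m n k a a' b b' : ℕ} {f : ℕ → σ × ℤ} {l l' s L : ℤ}

/-- The first `n + 1` terms of a sequence of configurations have their states in `Q`, and
consecutive heights among them differ by at most `m`. -/
structure IsBoundedSeq (Q : Finset σ) (m n : ℕ) (f : ℕ → σ × ℤ) : Prop where
  state_mem : ∀ i ≤ n, (f i).1 ∈ Q
  abs_step_le : ∀ i < n, |(f (i + 1)).2 - (f i).2| ≤ m

theorem IsBoundedSeq.mono (hf : IsBoundedSeq Q m n f) (hk : k ≤ n) : IsBoundedSeq Q m k f :=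
  ⟨fun i hi => hf.state_mem i (hi.trans hk), fun i hi => hf.abs_step_le i (hi.trans_le hk)⟩

theorem IsBoundedSeq.neg (hf : IsBoundedSeq Q m n f) :
    IsBoundedSeq Q m n fun i => ((f i).1, -(f i).2) :=
  ⟨hf.state_mem, fun i hi => by
    simpa only [neg_sub_neg, abs_sub_comm] using hf.abs_step_le i hi⟩

/-- `a` is the last time before `n` at which the sequence is at height at most `l`; time `n` itself
lies above `l`. -/
structure IsLastBelow (f : ℕ → σ × ℤ) (n : ℕ) (l : ℤ) (a : ℕ) : Prop where
  lt : a < n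
  le : (f a).2 ≤ l
  lt_of_lt : ∀ t, a < t → t ≤ n → l < (f t).2

theorem exists_isLastBelow (h0 : (f 0).2 ≤ l) (hn : l < (f n).2) : ∃ a, IsLastBelow f n l a := by
  have hle : (f (Nat.findGreatest (fun i => (f i).2 ≤ l) n)).2 ≤ l :=
    Nat.findGreatest_spec (P := fun i => (f i).2 ≤ l) n.zero_le h0
  refine ⟨_, (Nat.findGreatest_le n).lt_of_ne fun h => ?_, hle, fun t hat htn =>
    not_le.1 (Nat.findGreatest_is_greatest hat htn)⟩
  rw [h] at hle
  exact hle.not_gt hn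

theorem IsLastBelow.sub_lt (ha : IsLastBelow f n l a) (hf : IsBoundedSeq Q m n f) :
    l - m < (f a).2 := by
  have hnext := ha.lt_of_lt (a + 1) a.lt_succ_self ha.lt
  have hstep := (abs_le.1 (hf.abs_step_le a ha.lt)).2
  omega

theorem IsLastBelow.le_of_le (ha : IsLastBelow f n l a) (ha' : IsLastBelow f n l' a')
    (hl : l ≤ l') : a ≤ a' := by
  by_contra! hlt
  exact (ha'.lt_of_lt a hlt ha.lt.le).not_ge (ha.le.trans hl)

/-- `b` is the first time after `k`, and at most `n`, at which the sequence is at height at most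
`l`; time `k` itself lies above `l`. -/
structure IsFirstBelow (f : ℕ → σ × ℤ) (k n : ℕ) (l : ℤ) (b : ℕ) : Prop where
  lt : k < b
  le_end : b ≤ n
  le : (f b).2 ≤ l
  lt_of_lt : ∀ t, k ≤ t → t < b → l < (f t).2

theorem exists_isFirstBelow (hkn : k ≤ n) (hk : l < (f k).2) (hn : (f n).2 ≤ l) :
    ∃ b, IsFirstBelow f k n l b := by
  have hex : ∃ b, k ≤ b ∧ (f b).2 ≤ l := ⟨n, hkn, hn⟩
  obtain ⟨hkb, hle⟩ := Nat.find_spec hex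
  refine ⟨Nat.find hex, hkb.lt_of_ne fun h => ?_, Nat.find_min' hex ⟨hkn, hn⟩, hle,
    fun t hkt htb => not_le.1 fun ht => Nat.find_min hex htb ⟨hkt, ht⟩⟩
  rw [← h] at hle
  exact hle.not_gt hk

theorem IsFirstBelow.sub_lt (hb : IsFirstBelow f k n l b) (hf : IsBoundedSeq Q m n f) :
    l - m < (f b).2 := by
  obtain ⟨c, rfl⟩ : ∃ c, b = c + 1 := Nat.exists_eq_add_one.2 (Nat.zero_lt_of_lt hb.lt)
  have hprev := hb.lt_of_lt c (Nat.le_of_lt_succ hb.lt) c.lt_succ_self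
  have hstep := (abs_le.1 (hf.abs_step_le c hb.le_end)).1
  omega

theorem IsFirstBelow.le_of_le (hb : IsFirstBelow f k n l b) (hb' : IsFirstBelow f k n l' b')
    (hl : l ≤ l') : b' ≤ b := by
  by_contra! hlt
  exact (hb'.lt_of_lt b hb.lt.le hlt).not_ge (hb.le.trans hl)

/-- The sequence is in the same state at the times `a < a'`, and `s` higher at `a'` than at `a`. -/
structure IsLoop (f : ℕ → σ × ℤ) (a a' : ℕ) (s : ℤ) : Prop where
  lt : a < a'
  state_eq : (f a).1 = (f a').1
  height_eq : (f a').2 = (f a).2 + s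

theorem IsLoop.of_neg (h : IsLoop (fun i => ((f i).1, -(f i).2)) a a' s) : IsLoop f a a' (-s) :=
  ⟨h.lt, h.state_eq, by linarith [h.height_eq]⟩

/-- Pigeonhole on the last crossings of the levels `L, L + 1, …, L + K`, each of which happens
within `m` of its level. Levels are coloured to impose a further coincidence. -/
theorem IsBoundedSeq.exists_isLoop_of_color {γ : Type*} (hf : IsBoundedSeq Q m n f) {C : Finset γ}
    {color : ℕ → γ} {K : ℕ} (hK : Q.card * m * C.card ≤ K) (hcolor : ∀ i ≤ K, color i ∈ C)
    (h0 : (f 0).2 ≤ L) (hn : L + K < (f n).2) :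
    ∃ i j a a' : ℕ, i < j ∧ j ≤ K ∧ color i = color j ∧ IsLastBelow f n (L + i) a ∧
      IsLastBelow f n (L + j) a' ∧ IsLoop f a a' (j - i : ℤ) := by
  have hcross : ∀ i ≤ K, ∃ a, IsLastBelow f n (L + i) a := fun i hi =>
    exists_isLastBelow (by omega) (by omega)
  choose! a ha using hcross
  obtain ⟨i, hi, j, hj, hij, heq⟩ := Finset.exists_ne_map_eq_of_card_lt_of_maps_to
    (s := Finset.range (K + 1)) (t := (Q ×ˢ Finset.Ico (0 : ℤ) m) ×ˢ C)
    (f := fun i => (((f (a i)).1, L + i - (f (a i)).2), color i))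
    (by simpa [Nat.lt_succ_iff] using hK) fun i hi => by
      have hiK : i ≤ K := by simpa [Nat.lt_succ_iff] using hi
      have hle := (ha i hiK).le
      have hlt := (ha i hiK).sub_lt hf
      simp only [Finset.coe_product, Set.mem_prod, Finset.mem_coe, Finset.mem_Ico]
      exact ⟨⟨hf.state_mem _ (ha i hiK).lt.le, by omega, by omega⟩, hcolor i hiK⟩
  wlog hlt : i < j generalizing i j
  · exact this j hj i hi hij.symm heq.symm (by omega)
  rw [Finset.mem_range, Nat.lt_succ_iff] at hi hj
  simp only [Prod.mk.injEq] at heq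
  obtain ⟨⟨hstate, hoffset⟩, hcol⟩ := heq
  have hle : a i ≤ a j := (ha i hi).le_of_le (ha j hj) (by omega)
  have hne : a i ≠ a j := fun h => by rw [h] at hoffset; omega
  exact ⟨i, j, a i, a j, hlt, hj, hcol, ha i hi, ha j hj, hle.lt_of_ne hne, hstate, by omega⟩

theorem IsBoundedSeq.exists_isLoop_dvd (hf : IsBoundedSeq Q m n f) (hb : 0 < b)
    (h0 : (f 0).2 ≤ L) (hn : L + (Q.card * m * b : ℕ) < (f n).2) :
    ∃ a a' s : ℕ, IsLoop f a a' s ∧ a' ≤ n ∧ 0 < s ∧ b ∣ s ∧ s ≤ Q.card * m * b ∧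
      L - m < (f a).2 ∧ (f a).2 ≤ L + (Q.card * m * b : ℕ) := by
  obtain ⟨i, j, a, a', hij, hj, hmod, ha, ha', hloop⟩ :=
    hf.exists_isLoop_of_color (C := Finset.range b) (color := (· % b)) (by simp)
      (fun i _ => Finset.mem_range.2 (Nat.mod_lt i hb)) h0 hn
  have hlt := ha.sub_lt hf
  have hle := ha.le
  refine ⟨a, a', j - i, ?_, ha'.lt.le, by omega, (Nat.modEq_iff_dvd' hij.le).1 hmod, by omega,
    by omega, by omega⟩
  rwa [Nat.cast_sub hij.le]

/-- Level `L + i` is coloured by the state and the overshoot of its first crossing after the peak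
`k`, so that the ascending loop found before `k` is matched by a descending loop after `k`. -/
theorem IsBoundedSeq.exists_opposite_isLoop_of_peak (hf : IsBoundedSeq Q m n f) (hkn : k ≤ n)
    (h0 : (f 0).2 ≤ L) (hn : (f n).2 ≤ L) (hk : L + ((Q.card * m) ^ 2 : ℕ) < (f k).2) :
    ∃ (a a' b' b : ℕ) (s : ℤ), 0 < s ∧ IsLoop f a a' s ∧ a' ≤ b' ∧ IsLoop f b' b (-s) ∧ b ≤ n ∧
      ∀ t, a' ≤ t → t ≤ b' → min (f a').2 (f b').2 ≤ (f t).2 := by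
  have hcross : ∀ i ≤ (Q.card * m) ^ 2, ∃ b, IsFirstBelow f k n (L + i) b := fun i hi =>
    exists_isFirstBelow hkn (by omega) (by omega)
  choose! b hb using hcross
  obtain ⟨i, j, a, a', hij, hj, hcol, -, ha', hup⟩ :=
    (hf.mono hkn).exists_isLoop_of_color (C := Q ×ˢ Finset.Ico (0 : ℤ) m)
      (color := fun i => ((f (b i)).1, L + i - (f (b i)).2)) (by simp [sq])
      (fun i hi => by
        have hle := (hb i hi).le
        have hlt := (hb i hi).sub_lt hf
        simp only [Finset.mem_product, Finset.mem_Ico]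
        exact ⟨hf.state_mem _ (hb i hi).le_end, by omega, by omega⟩) h0 hk
  have hbi := hb i (hij.le.trans hj)
  have hbj := hb j hj
  obtain ⟨hstate, hoffset⟩ := Prod.mk.inj hcol
  have hdown : IsLoop f (b j) (b i) (-(j - i : ℤ)) :=
    ⟨(hbi.le_of_le hbj (by omega)).lt_of_ne fun h => by rw [h] at hoffset; omega,
      hstate.symm, by omega⟩
  refine ⟨a, a', b j, b i, j - i, by omega, hup, ha'.lt.le.trans hbj.lt.le, hdown, hbi.le_end,
    fun t hat htb => ?_⟩
  rcases hat.eq_or_lt with rfl | hat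
  · exact min_le_left _ _
  rcases htb.eq_or_lt with rfl | htb
  · exact min_le_right _ _
  have hlevel : L + j < (f t).2 :=
    (le_total t k).elim (ha'.lt_of_lt t hat) fun hkt => hbj.lt_of_lt t hkt htb
  exact (min_le_left _ _).trans (ha'.le.trans hlevel.le)

end Sequences

section Runs

variable {T : Finset Trans1} {A : Set ℤ} {p q r : ℕ} {u v w s x : ℤ} {π π' β : List Trans1}
  {t : Trans1}

theorem run1_nil_iff : Run1 T A p u q v [] ↔ p = q ∧ u = v ∧ u ∈ A := by
  constructor
  · rintro ⟨-, hpath, hu, hv, -⟩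
    exact ⟨hpath, by simpa [disp1] using hv.symm, hu⟩
  · rintro ⟨rfl, rfl, hu⟩
    exact ⟨by simp, rfl, hu, by simp [disp1], fun i h1 h2 => absurd h2 (Nat.not_le.2 h1)⟩

theorem run1_cons_iff :
    Run1 T A p u q v (t :: π) ↔
      t ∈ T ∧ t.1 = p ∧ u ∈ A ∧ Run1 T A t.2.2 (u + t.2.1) q v π := by
  have hdisp : ∀ π : List Trans1, u + disp1 (t :: π) = u + t.2.1 + disp1 π := fun π => by
    simp [disp1, add_assoc]
  constructor
  · rintro ⟨hT, ⟨hp, hpath⟩, hu, hv, hA⟩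
    refine ⟨hT t List.mem_cons_self, hp, hu, fun t' h => hT t' (List.mem_cons_of_mem t h), hpath,
      ?_, hv.trans (hdisp π), fun i _ hi => ?_⟩
    · simpa [disp1] using hA 1 le_rfl (by simp)
    · rw [← hdisp]
      exact hA (i + 1) i.succ_pos (Nat.succ_le_succ hi)
  · rintro ⟨ht, hp, hu, hT, hpath, hu', hv, hA⟩
    refine ⟨List.forall_mem_cons.2 ⟨ht, hT⟩, ⟨hp, hpath⟩, hu, hv.trans (hdisp π).symm, ?_⟩
    rintro (_ | _ | i) h1 h2
    · exact absurd h1 (by simp)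
    · simpa [disp1] using hu'
    · rw [List.take_succ_cons, hdisp]
      exact hA (i + 1) i.succ_pos (Nat.le_of_succ_le_succ h2)

theorem Run1.end_mem (h : Run1 T A p u q v π) : v ∈ A := by
  induction π generalizing p u with
  | nil =>
    obtain ⟨-, rfl, hu⟩ := run1_nil_iff.1 h
    exact hu
  | cons t π ih => exact ih (run1_cons_iff.1 h).2.2.2

theorem Run1.append (h : Run1 T A p u q v π) (h' : Run1 T A q v r w π') :
    Run1 T A p u r w (π ++ π') := by
  induction π generalizing p u with
  | nil =>
    obtain ⟨rfl, rfl, -⟩ := run1_nil_iff.1 h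
    exact h'
  | cons t π ih =>
    obtain ⟨ht, hp, hu, hrest⟩ := run1_cons_iff.1 h
    exact run1_cons_iff.2 ⟨ht, hp, hu, ih hrest⟩

theorem Run1.raise (h : Run1 T NNeg p u q v π) (hs : 0 ≤ s) :
    Run1 T NNeg p (u + s) q (v + s) π := by
  induction π generalizing p u with
  | nil =>
    obtain ⟨rfl, rfl, hu⟩ := run1_nil_iff.1 h
    exact run1_nil_iff.2 ⟨rfl, rfl, add_nonneg hu hs⟩
  | cons t π ih =>
    obtain ⟨ht, hp, hu, hrest⟩ := run1_cons_iff.1 h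
    exact run1_cons_iff.2 ⟨ht, hp, add_nonneg hu hs, add_right_comm u s _ ▸ ih hrest⟩

theorem Run1.replicate_of_ascending {b : ℕ} (h : Run1 T NNeg r x r (x + b) β) (e : ℕ) :
    Run1 T NNeg r x r (x + e * b) (List.replicate e β).flatten := by
  induction e with
  | zero => simpa [run1_nil_iff] using h.2.2.1
  | succ e ih =>
    rw [List.replicate_succ, List.flatten_cons]
    convert h.append (ih.raise b.cast_nonneg) using 1
    push_cast
    ring

theorem Run1.replicate_of_descending {b : ℕ} (h : Run1 T NNeg r (x + b) r x β) (e : ℕ) :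
    Run1 T NNeg r (x + e * b) r x (List.replicate e β).flatten := by
  induction e with
  | zero => simpa [run1_nil_iff] using h.end_mem
  | succ e ih =>
    rw [List.replicate_succ, List.flatten_cons]
    convert (h.raise (s := e * b) (by positivity)).append ih using 1
    push_cast
    ring

end Runs

section Traces

variable {T : Finset Trans1} {n k i j : ℕ} {f : ℕ → ℕ × ℤ} {c d d' : ℕ × ℤ} {s : ℤ}

/-- Reachability over `ℕ` between the configurations `c` and `d` in exactly `n` steps. -/
def ReachIn (T : Finset Trans1) (n : ℕ) (c d : ℕ × ℤ) : Prop :=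
  ∃ π, π.length = n ∧ Run1 T NNeg c.1 c.2 d.1 d.2 π

theorem ReachIn.trans (h : ReachIn T n c d) (h' : ReachIn T k d d') : ReachIn T (n + k) c d' := by
  obtain ⟨π, rfl, hπ⟩ := h
  obtain ⟨π', rfl, hπ'⟩ := h'
  exact ⟨π ++ π', List.length_append, hπ.append hπ'⟩

/-- `f 0, …, f n` are the configurations visited by a run over `ℕ` with `n` steps. -/
structure IsTrace (T : Finset Trans1) (n : ℕ) (f : ℕ → ℕ × ℤ) : Prop where
  step_mem : ∀ i < n, ((f i).1, (f (i + 1)).2 - (f i).2, (f (i + 1)).1) ∈ T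
  nonneg : ∀ i ≤ n, 0 ≤ (f i).2

theorem IsTrace.reachIn (hf : IsTrace T n f) : ReachIn T n (f 0) (f n) := by
  induction n generalizing f with
  | zero => exact ⟨[], rfl, run1_nil_iff.2 ⟨rfl, rfl, hf.nonneg 0 le_rfl⟩⟩
  | succ n ih =>
    have htail : IsTrace T n fun i => f (i + 1) :=
      ⟨fun i hi => hf.step_mem (i + 1) (by omega), fun i hi => hf.nonneg (i + 1) (by omega)⟩
    obtain ⟨π, hlen, hπ⟩ := ih htail
    exact ⟨_ :: π, by rw [List.length_cons, hlen], run1_cons_iff.2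
      ⟨hf.step_mem 0 n.succ_pos, rfl, hf.nonneg 0 (Nat.zero_le _), by simpa using hπ⟩⟩

theorem ReachIn.exists_isTrace (h : ReachIn T n c d) : ∃ f, IsTrace T n f ∧ f 0 = c ∧ f n = d := by
  obtain ⟨π, rfl, hπ⟩ := h
  induction π generalizing c with
  | nil =>
    obtain ⟨hstate, hheight, hc⟩ := run1_nil_iff.1 hπ
    exact ⟨fun _ => c, ⟨by simp, fun _ _ => hc⟩, rfl, Prod.ext hstate hheight⟩
  | cons t π ih =>
    obtain ⟨ht, hsource, hc, hrest⟩ := run1_cons_iff.1 hπ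
    obtain ⟨f, hf, hf0, hfn⟩ := ih (c := (t.2.2, c.2 + t.2.1)) hrest
    refine ⟨fun i => i.casesOn c f, ⟨?_, ?_⟩, rfl, hfn⟩
    · rintro (_ | i) hi
      · simpa [hf0, ← hsource] using ht
      · exact hf.step_mem i (Nat.lt_of_succ_lt_succ hi)
    · rintro (_ | i) hi
      · exact hc
      · exact hf.nonneg i (Nat.le_of_succ_le_succ hi)

theorem IsTrace.reachIn_segment_add (hf : IsTrace T n f) (hij : i ≤ j) (hj : j ≤ n)
    (hs : ∀ t, i ≤ t → t ≤ j → 0 ≤ (f t).2 + s) :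
    ReachIn T (j - i) ((f i).1, (f i).2 + s) ((f j).1, (f j).2 + s) := by
  have hshift : IsTrace T (j - i) fun t => ((f (i + t)).1, (f (i + t)).2 + s) :=
    ⟨fun t ht => by simpa [add_assoc] using hf.step_mem (i + t) (by omega),
      fun t ht => hs _ (by omega) (by omega)⟩
  simpa [Nat.add_sub_cancel' hij] using hshift.reachIn

theorem IsTrace.reachIn_segment (hf : IsTrace T n f) (hij : i ≤ j) (hj : j ≤ n) :
    ReachIn T (j - i) (f i) (f j) := by
  simpa using hf.reachIn_segment_add (s := 0) hij hj fun t _ ht => by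
    simpa using hf.nonneg t (ht.trans hj)

/-- The transitions of `T` traversed backwards. -/
def reversal (T : Finset Trans1) : Finset Trans1 := T.image fun t => (t.2.2, -t.2.1, t.1)

theorem mem_reversal {t : Trans1} : t ∈ reversal T ↔ (t.2.2, -t.2.1, t.1) ∈ T := by
  simp only [reversal, Finset.mem_image]
  constructor
  · rintro ⟨t, ht, rfl⟩
    simpa using ht
  · exact fun h => ⟨_, h, by simp⟩

theorem reversal_reversal : reversal (reversal T) = T := by
  ext t
  simp [mem_reversal]

theorem tnorm1_reversal : tnorm1 (reversal T) = tnorm1 T := by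
  simp [tnorm1, reversal, Finset.sup_image, Function.comp_def]

theorem ReachIn.reverse (h : ReachIn T n c d) : ReachIn (reversal T) n d c := by
  obtain ⟨f, hf, rfl, rfl⟩ := h.exists_isTrace
  have hrev : IsTrace (reversal T) n fun i => f (n - i) := by
    refine ⟨fun i hi => mem_reversal.2 ?_, fun i _ => hf.nonneg _ (n.sub_le i)⟩
    have hstep := hf.step_mem (n - (i + 1)) (by omega)
    rw [show n - (i + 1) + 1 = n - i by omega] at hstep
    simpa using hstep
  simpa using hrev.reachIn

theorem ReachIn.of_reversal (h : ReachIn (reversal T) n c d) : ReachIn T n d c :=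
  reversal_reversal (T := T) ▸ h.reverse

end Traces

section ShortRuns

variable {Q : Finset ℕ} {T : Finset Trans1} {n p q r b : ℕ} {f : ℕ → ℕ × ℤ} {u v y : ℤ}

theorem abs_update_le_tnorm1 {t : Trans1} (ht : t ∈ T) : |t.2.1| ≤ tnorm1 T := by
  rw [Int.abs_eq_natAbs, Nat.cast_le]
  exact Finset.le_sup (f := fun t : Trans1 => t.2.1.natAbs) ht

theorem IsTrace.isBoundedSeq (hf : IsTrace T n f) (hT : ∀ t ∈ T, t.2.2 ∈ Q) (h0 : (f 0).1 ∈ Q) :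
    IsBoundedSeq Q (tnorm1 T) n f where
  state_mem
    | 0, _ => h0
    | i + 1, hi => hT _ (hf.step_mem i hi)
  abs_step_le i hi := abs_update_le_tnorm1 (hf.step_mem i hi)

theorem IsTrace.exists_reachIn_lt_of_isLoop {a a' b' b : ℕ} {s : ℤ} (hf : IsTrace T n f)
    (hup : IsLoop f a a' s) (hab : a' ≤ b') (hdown : IsLoop f b' b (-s)) (hb : b ≤ n)
    (hs : ∀ t, a' ≤ t → t ≤ b' → 0 ≤ (f t).2 - s) : ∃ k < n, ReachIn T k (f 0) (f n) := by
  have haa' := hup.lt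
  have hbb' := hdown.lt
  have hstart : ((f a').1, (f a').2 + -s) = f a :=
    Prod.ext hup.state_eq.symm (by simp [hup.height_eq])
  have hend : ((f b').1, (f b').2 + -s) = f b := Prod.ext hdown.state_eq hdown.height_eq.symm
  have hmiddle := hf.reachIn_segment_add (s := -s) hab (by omega) hs
  rw [hstart, hend] at hmiddle
  exact ⟨_, by omega, ((hf.reachIn_segment a.zero_le (by omega)).trans hmiddle).trans
    (hf.reachIn_segment hb le_rfl)⟩

/-- A trace of minimal length between its endpoints. -/
structure IsShortestTrace (T : Finset Trans1) (n : ℕ) (f : ℕ → ℕ × ℤ) : Prop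
    extends IsTrace T n f where
  not_reachIn_of_lt : ∀ k < n, ¬ ReachIn T k (f 0) (f n)

theorem ReachIn.exists_isShortestTrace {c d : ℕ × ℤ} (h : ReachIn T n c d) :
    ∃ k f, IsShortestTrace T k f ∧ f 0 = c ∧ f k = d := by
  classical
  have hex : ∃ k, ReachIn T k c d := ⟨n, h⟩
  obtain ⟨f, hf, hf0, hfk⟩ := (Nat.find_spec hex).exists_isTrace
  refine ⟨_, f, ⟨hf, fun k hk => ?_⟩, hf0, hfk⟩
  rw [hf0, hfk]
  exact Nat.find_min hex hk

namespace IsShortestTrace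

theorem le_max_add (hf : IsShortestTrace T n f) (hT : ∀ t ∈ T, t.2.2 ∈ Q) (h0 : (f 0).1 ∈ Q)
    {i : ℕ} (hi : i ≤ n) :
    (f i).2 ≤ max (f 0).2 (f n).2 + ((Q.card * tnorm1 T) ^ 2 : ℕ) := by
  by_contra! hpeak
  obtain ⟨a, a', b', b, s, -, hup, hab, hdown, hb, hmin⟩ :=
    (hf.isBoundedSeq hT h0).exists_opposite_isLoop_of_peak hi (le_max_left _ _) (le_max_right _ _)
      hpeak
  obtain ⟨k, hk, hreach⟩ := hf.exists_reachIn_lt_of_isLoop hup hab hdown hb fun t hat htb => by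
    have ha := hf.nonneg a ((hup.lt.le.trans hab).trans (hdown.lt.le.trans hb))
    have hb := hf.nonneg b hb
    have ha' := hup.height_eq
    have hb' := hdown.height_eq
    have hmid := hmin t hat htb
    omega
  exact hf.not_reachIn_of_lt k hk hreach

theorem min_sub_le (hf : IsShortestTrace T n f) (hT : ∀ t ∈ T, t.2.2 ∈ Q) (h0 : (f 0).1 ∈ Q)
    {i : ℕ} (hi : i ≤ n) :
    min (f 0).2 (f n).2 - ((Q.card * tnorm1 T) ^ 2 : ℕ) ≤ (f i).2 := by
  by_contra! hvalley
  obtain ⟨a, a', b', b, s, hs, hdown, hab, hup, hb, -⟩ :=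
    (hf.isBoundedSeq hT h0).neg.exists_opposite_isLoop_of_peak (L := -min (f 0).2 (f n).2) hi
      (neg_le_neg (min_le_left _ _)) (neg_le_neg (min_le_right _ _)) (by dsimp only; omega)
  obtain ⟨k, hk, hreach⟩ := hf.exists_reachIn_lt_of_isLoop hdown.of_neg hab hup.of_neg hb
    fun t _ htb => by
      have hmid := hf.nonneg t (htb.trans (hup.lt.le.trans hb))
      omega
  exact hf.not_reachIn_of_lt k hk hreach

theorem injOn (hf : IsShortestTrace T n f) : Set.InjOn f (Set.Iic n) := by
  intro i hi j hj heq
  wlog hij : i ≤ j generalizing i j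
  · exact (this hj hi heq.symm (le_of_not_ge hij)).symm
  by_contra hne
  have hinitial := hf.reachIn_segment i.zero_le hi
  rw [heq] at hinitial
  rw [Set.mem_Iic] at hi hj
  exact hf.not_reachIn_of_lt _ (by omega) (hinitial.trans (hf.reachIn_segment hj le_rfl))

theorem length_lt (hf : IsShortestTrace T n f) (hT : ∀ t ∈ T, t.2.2 ∈ Q) (h0 : (f 0).1 ∈ Q) :
    n < Q.card * (((f n).2 - (f 0).2).natAbs + 2 * (Q.card * tnorm1 T) ^ 2 + 1) := by
  set H := (Q.card * tnorm1 T) ^ 2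
  have hmaps : Set.MapsTo f (Finset.range (n + 1))
      (Q ×ˢ Finset.Icc (min (f 0).2 (f n).2 - H) (max (f 0).2 (f n).2 + H) :) := by
    intro i hi
    have hin : i ≤ n := by simpa [Nat.lt_succ_iff] using hi
    simp only [Finset.coe_product, Set.mem_prod, Finset.mem_coe, Finset.mem_Icc]
    exact ⟨(hf.isBoundedSeq hT h0).state_mem i hin, hf.min_sub_le hT h0 hin,
      hf.le_max_add hT h0 hin⟩
  have hcard := Finset.card_le_card_of_injOn f hmaps
    (hf.injOn.mono fun i hi => by simpa [Nat.lt_succ_iff] using hi)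
  rw [Finset.card_range, Finset.card_product, Int.card_Icc] at hcard
  refine hcard.trans (Nat.mul_le_mul_left _ ?_)
  omega

end IsShortestTrace

/-- A strict bound on the length of a shortest run in a 1-VASS with `n` states and norm `m` whose
endpoints differ in height by at most `(n * m) ^ 2`. -/
def shortBound (n m : ℕ) : ℕ := n * (3 * (n * m) ^ 2 + 1)

theorem three_mul_shortBound_le (n m : ℕ) : 3 * shortBound n m ≤ (n + m) ^ 5 + 3 := by
  have hlinear : 3 * n ≤ n ^ 5 + 3 := by
    rcases le_or_gt n 1 with hn | hn
    · interval_cases n <;> norm_num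
    · have hpow : 2 ^ 4 ≤ n ^ 4 := Nat.pow_le_pow_left hn 4
      calc 3 * n ≤ n ^ 4 * n := Nat.mul_le_mul_right n (by omega)
        _ = n ^ 5 := by ring
        _ ≤ n ^ 5 + 3 := Nat.le_add_right _ _
  calc 3 * shortBound n m = 9 * (n ^ 3 * m ^ 2) + 3 * n := by rw [shortBound]; ring
    _ ≤ 10 * (n ^ 3 * m ^ 2) + (n ^ 5 + 3) := by omega
    _ ≤ 10 * (n ^ 3 * m ^ 2) + (n ^ 5 + 3) +
        (5 * n ^ 4 * m + 10 * n ^ 2 * m ^ 3 + 5 * n * m ^ 4 + m ^ 5) := Nat.le_add_right _ _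
    _ = (n + m) ^ 5 + 3 := by ring

theorem ReachIn.exists_lt_shortBound (h : ReachIn T n (p, u) (q, v)) (hT : ∀ t ∈ T, t.2.2 ∈ Q)
    (hp : p ∈ Q) (huv : |v - u| ≤ ((Q.card * tnorm1 T) ^ 2 : ℕ)) :
    ∃ k < shortBound Q.card (tnorm1 T), ReachIn T k (p, u) (q, v) := by
  obtain ⟨k, f, hf, hf0, hfk⟩ := h.exists_isShortestTrace
  have hlen := hf.length_lt hT (by rwa [hf0])
  have hreach := hf.reachIn
  rw [hf0, hfk] at hlen hreach
  refine ⟨k, hlen.trans_le (Nat.mul_le_mul_left _ ?_), hreach⟩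
  rw [Int.abs_eq_natAbs, Nat.cast_le] at huv
  dsimp only
  omega

/-- A loop whose effect is a multiple of `b` is cut out, and the part before it raised instead. -/
theorem ReachIn.exists_raise_start (h : ReachIn T n (r, y) (q, v)) (hT : ∀ t ∈ T, t.2.2 ∈ Q)
    (hr : r ∈ Q) (hb : 0 < b) (hyv : y + (Q.card * tnorm1 T * b : ℕ) < v) :
    ∃ e k : ℕ, 0 < e ∧ y + e * b ≤ v ∧ ReachIn T k (r, y + e * b) (q, v) := by
  obtain ⟨f, hf, hf0, hfn⟩ := h.exists_isTrace
  obtain ⟨a, a', _, hloop, ha'n, hpos, ⟨e, rfl⟩, hle, -, -⟩ :=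
    (hf.isBoundedSeq hT (by rwa [hf0])).exists_isLoop_dvd (L := y) hb (by rw [hf0])
      (by rwa [hfn])
  have han := hloop.lt.le.trans ha'n
  have hinitial := hf.reachIn_segment_add (s := (b * e : ℕ)) a.zero_le han fun t _ hta => by
    have ht := hf.nonneg t (hta.trans han)
    omega
  rw [hloop.state_eq, ← hloop.height_eq, hf0] at hinitial
  have hreach := hinitial.trans (hf.reachIn_segment ha'n le_rfl)
  have hmul : ((b * e : ℕ) : ℤ) = e * b := by push_cast; ring
  rw [hfn, hmul] at hreach
  exact ⟨e, _, Nat.pos_of_mul_pos_left hpos, by omega, hreach⟩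

theorem ReachIn.exists_raise_start_close (h : ReachIn T n (r, y) (q, v))
    (hT : ∀ t ∈ T, t.2.2 ∈ Q) (hr : r ∈ Q) (hb : 0 < b) (hyv : y ≤ v) :
    ∃ e k : ℕ, y + e * b ≤ v ∧ v ≤ y + e * b + (Q.card * tnorm1 T * b : ℕ) ∧
      ReachIn T k (r, y + e * b) (q, v) := by
  induction hgap : (v - y).toNat using Nat.strong_induction_on generalizing y n with
  | _ gap ih =>
    rcases le_or_gt v (y + (Q.card * tnorm1 T * b : ℕ)) with hclose | hfar
    · exact ⟨0, n, by simpa using hyv, by simpa using hclose, by simpa using h⟩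
    · obtain ⟨e, k, he, hle, hreach⟩ := h.exists_raise_start hT hr hb hfar
      have hpos : (0 : ℤ) < e * b := by positivity
      obtain ⟨e', k', hle', hclose, hreach'⟩ := ih _ (by omega) hreach hle rfl
      have hadd : y + e * b + e' * b = y + ((e + e' : ℕ) : ℤ) * b := by push_cast; ring
      rw [hadd] at hle' hclose hreach'
      exact ⟨e + e', k', hle', hclose, hreach'⟩

theorem ReachIn.exists_cycle_of_ascending (h : ReachIn T n (p, u) (q, v))
    (hT : ∀ t ∈ T, t.2.2 ∈ Q) (hp : p ∈ Q) (huv : u + (Q.card * tnorm1 T : ℕ) < v) :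
    ∃ r ∈ Q, ∃ (x : ℤ) (b : ℕ), |x - u| ≤ (Q.card * tnorm1 T : ℕ) ∧ 0 < b ∧
      b ≤ Q.card * tnorm1 T ∧ (∃ k, ReachIn T k (p, u) (r, x)) ∧
      (∃ k, ReachIn T k (r, x) (r, x + b)) ∧ ∃ k, ReachIn T k (r, x) (q, v) := by
  obtain ⟨f, hf, hf0, hfn⟩ := h.exists_isTrace
  have hbdd := hf.isBoundedSeq hT (by rwa [hf0])
  obtain ⟨a, a', b, hloop, ha'n, hb, -, hbM, hlow, hhigh⟩ :=
    hbdd.exists_isLoop_dvd (L := u) one_pos (by rw [hf0]) (by rwa [hfn, mul_one])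
  rw [mul_one] at hbM hhigh
  have han := hloop.lt.le.trans ha'n
  have hnorm : tnorm1 T ≤ Q.card * tnorm1 T :=
    Nat.le_mul_of_pos_left _ (Finset.card_pos.2 ⟨p, hp⟩)
  have hfa' : f a' = ((f a).1, (f a).2 + b) := Prod.ext hloop.state_eq.symm hloop.height_eq
  exact ⟨(f a).1, hbdd.state_mem a han, (f a).2, b, by rw [abs_le]; omega, hb, hbM,
    ⟨_, hf0 ▸ hf.reachIn_segment a.zero_le han⟩, ⟨_, hfa' ▸ hf.reachIn_segment hloop.lt.le ha'n⟩,
    ⟨_, hfn ▸ hf.reachIn_segment han le_rfl⟩⟩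

/-- Later loops of effect divisible by `b` are traded for `e` iterations of `r(x) → r(x + b)`. -/
theorem ReachIn.exists_short_of_ascending (h : ReachIn T n (p, u) (q, v))
    (hT : ∀ t ∈ T, t.2.2 ∈ Q) (hp : p ∈ Q) (huv : u + (Q.card * tnorm1 T : ℕ) < v) :
    ∃ (r : ℕ) (x : ℤ) (b e : ℕ), 0 < b ∧
      (∃ k < shortBound Q.card (tnorm1 T), ReachIn T k (p, u) (r, x)) ∧
      (∃ k < shortBound Q.card (tnorm1 T), ReachIn T k (r, x) (r, x + b)) ∧
      ∃ k < shortBound Q.card (tnorm1 T), ReachIn T k (r, x + e * b) (q, v) := by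
  obtain ⟨r, hr, x, b, hxu, hb, hbM, ⟨_, hstart⟩, ⟨_, hcycle⟩, _, hfinish⟩ :=
    h.exists_cycle_of_ascending hT hp huv
  obtain ⟨e, _, hle, hclose, hfinish'⟩ :=
    hfinish.exists_raise_start_close hT hr hb (by rw [abs_le] at hxu; omega)
  have hM : Q.card * tnorm1 T ≤ (Q.card * tnorm1 T) ^ 2 := Nat.le_self_pow two_ne_zero _
  have hMb : Q.card * tnorm1 T * b ≤ (Q.card * tnorm1 T) ^ 2 := by
    rw [sq]
    exact Nat.mul_le_mul_left _ hbM
  exact ⟨r, x, b, e, hb, hstart.exists_lt_shortBound hT hp (hxu.trans (Nat.cast_le.2 hM)),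
    hcycle.exists_lt_shortBound hT hr (by rw [abs_le]; omega),
    hfinish'.exists_lt_shortBound hT hr (by rw [abs_le]; omega)⟩

end ShortRuns

section Schemes

variable {Q : Finset ℕ} {T : Finset Trans1} {p q r n N : ℕ} {u v x y : ℤ}
  {α β γ π π' : List Trans1}

/-- The linear path schemes over `T` of length at most `N` with at most one cycle. -/
def shortSchemes (T : Finset Trans1) (N : ℕ) : Set LPS1 :=
  {ρ | (∃ p q, IsLPSFrom1 T p q ρ) ∧ lpsLen1 ρ ≤ N ∧ numCycles1 ρ ≤ 1}

theorem finite_lists_of_length_le {δ : Type*} {S : Set δ} (hS : S.Finite) (N : ℕ) :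
    {l : List δ | (∀ x ∈ l, x ∈ S) ∧ l.length ≤ N}.Finite := by
  have : Finite S := hS
  refine ((List.finite_length_le S N).image (List.map Subtype.val)).subset ?_
  rintro l ⟨hl, hlen⟩
  lift l to List S using hl
  exact ⟨l, by simpa using hlen, rfl⟩

theorem finite_shortSchemes (T : Finset Trans1) (N : ℕ) : (shortSchemes T N).Finite := by
  have hwords := finite_lists_of_length_le T.finite_toSet N
  refine (hwords.prod (finite_lists_of_length_le (hwords.prod hwords) 1)).subset ?_
  rintro ρ ⟨⟨p, q, hT, -, -⟩, hlen, hcycles⟩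
  have hword : ∀ π : List Trans1, π.Sublist (lpsSupport1 ρ) →
      π ∈ {l : List Trans1 | (∀ t ∈ l, t ∈ (T : Set Trans1)) ∧ l.length ≤ N} :=
    fun π hπ => ⟨fun t ht => hT t (hπ.subset ht), hπ.length_le.trans hlen⟩
  refine ⟨hword _ (List.sublist_append_left _ _), fun s hs => ?_, hcycles⟩
  have hsub : (s.1 ++ s.2).Sublist (lpsSupport1 ρ) :=
    (List.sublist_flatten_of_mem (List.mem_map_of_mem (f := fun s => s.1 ++ s.2) hs)).trans
      (List.sublist_append_right _ _)
  exact ⟨hword _ ((List.sublist_append_left _ _).trans hsub),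
    hword _ ((List.sublist_append_right _ _).trans hsub)⟩

theorem IsPathFrom1.append (h : IsPathFrom1 p q π) (h' : IsPathFrom1 q r π') :
    IsPathFrom1 p r (π ++ π') := by
  induction π generalizing p with
  | nil =>
    cases h
    exact h'
  | cons t π ih => exact ⟨h.1, ih h.2⟩

theorem exists_mem_shortSchemes_of_run1 {A : Set ℤ} (h : Run1 T A p u q v α) (hN : α.length ≤ N) :
    ∃ ρ ∈ shortSchemes T N, ∃ π, InLang1 ρ π ∧ Run1 T A p u q v π :=
  ⟨(α, []), ⟨⟨p, q, by simpa [lpsSupport1] using h.1, by simpa [lpsSupport1] using h.2.1, by simp⟩,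
    by simpa [lpsLen1, lpsSupport1] using hN, by simp [numCycles1]⟩,
    α, ⟨[], rfl, by simp [lpsWord1]⟩, h⟩

theorem exists_mem_shortSchemes_of_run1_replicate {A : Set ℤ} {e : ℕ} (hα : Run1 T A p u r x α)
    (hβ : Run1 T A r x r y (List.replicate e β).flatten) (hγ : Run1 T A r y q v γ)
    (hβT : ∀ t ∈ β, t ∈ T) (hβr : IsPathFrom1 r r β) (hβ0 : β ≠ [])
    (hN : α.length + β.length + γ.length ≤ N) :
    ∃ ρ ∈ shortSchemes T N, ∃ π, InLang1 ρ π ∧ Run1 T A p u q v π := by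
  have hsupport : lpsSupport1 (α, [(β, γ)]) = α ++ (β ++ γ) := by simp [lpsSupport1]
  refine ⟨(α, [(β, γ)]), ⟨⟨p, q, ?_, ?_, ?_⟩, ?_, le_rfl⟩, _, ⟨[e], rfl, rfl⟩, ?_⟩
  · rw [hsupport]
    exact List.forall_mem_append.2 ⟨hα.1, List.forall_mem_append.2 ⟨hβT, hγ.1⟩⟩
  · rw [hsupport]
    exact hα.2.1.append (hβr.append hγ.2.1)
  · exact List.forall_mem_singleton.2 ⟨hβ0, r, hβr⟩
  · rw [lpsLen1, hsupport, List.length_append, List.length_append]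
    omega
  · simpa [lpsWord1] using hα.append (hβ.append hγ)

theorem Run1.ne_nil {A : Set ℤ} (h : Run1 T A p u q v π) (huv : u ≠ v) : π ≠ [] := by
  rintro rfl
  exact huv (run1_nil_iff.1 h).2.1

theorem exists_mem_shortSchemes_of_ascending (h : ReachIn T n (p, u) (q, v))
    (hT : ∀ t ∈ T, t.2.2 ∈ Q) (hp : p ∈ Q) (huv : u + (Q.card * tnorm1 T : ℕ) < v) :
    ∃ ρ ∈ shortSchemes T ((Q.card + tnorm1 T) ^ 5), ∃ π, InLang1 ρ π ∧ Run1 T NNeg p u q v π := by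
  obtain ⟨r, x, b, e, hb, ⟨_, hαlen, α, rfl, hα⟩, ⟨_, hβlen, β, rfl, hβ⟩, _, hγlen, γ, rfl, hγ⟩ :=
    h.exists_short_of_ascending hT hp huv
  have hbound := three_mul_shortBound_le Q.card (tnorm1 T)
  exact exists_mem_shortSchemes_of_run1_replicate hα (hβ.replicate_of_ascending e) hγ hβ.1 hβ.2.1
    (hβ.ne_nil (by dsimp only; omega)) (by omega)

theorem exists_mem_shortSchemes_of_descending (h : ReachIn T n (p, u) (q, v))
    (hT : ∀ t ∈ T, t.1 ∈ Q) (hq : q ∈ Q) (huv : v + (Q.card * tnorm1 T : ℕ) < u) :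
    ∃ ρ ∈ shortSchemes T ((Q.card + tnorm1 T) ^ 5), ∃ π, InLang1 ρ π ∧ Run1 T NNeg p u q v π := by
  obtain ⟨r, x, b, e, hb, ⟨_, hγlen, hqr⟩, ⟨_, hβlen, hrr⟩, _, hαlen, hrp⟩ :=
    h.reverse.exists_short_of_ascending (fun t ht => hT _ (mem_reversal.1 ht)) hq
      (by rwa [tnorm1_reversal])
  obtain ⟨α, rfl, hα⟩ := hrp.of_reversal
  obtain ⟨β, rfl, hβ⟩ := hrr.of_reversal
  obtain ⟨γ, rfl, hγ⟩ := hqr.of_reversal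
  rw [tnorm1_reversal] at hαlen hβlen hγlen
  have hbound := three_mul_shortBound_le Q.card (tnorm1 T)
  exact exists_mem_shortSchemes_of_run1_replicate hα (hβ.replicate_of_descending e) hγ hβ.1 hβ.2.1
    (hβ.ne_nil (by dsimp only; omega)) (by omega)

theorem exists_mem_shortSchemes_of_level (h : ReachIn T n (p, u) (q, v)) (hT : ∀ t ∈ T, t.2.2 ∈ Q)
    (hp : p ∈ Q) (huv : |v - u| ≤ (Q.card * tnorm1 T : ℕ)) :
    ∃ ρ ∈ shortSchemes T ((Q.card + tnorm1 T) ^ 5), ∃ π, InLang1 ρ π ∧ Run1 T NNeg p u q v π := by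
  have hsq : Q.card * tnorm1 T ≤ (Q.card * tnorm1 T) ^ 2 := Nat.le_self_pow two_ne_zero _
  obtain ⟨_, hlen, α, rfl, hα⟩ := h.exists_lt_shortBound hT hp (huv.trans (Nat.cast_le.2 hsq))
  have hbound := three_mul_shortBound_le Q.card (tnorm1 T)
  exact exists_mem_shortSchemes_of_run1 hα (by omega)

theorem exists_mem_shortSchemes_of_reach1 (hT : ∀ t ∈ T, t.1 ∈ Q ∧ t.2.2 ∈ Q) (hp : p ∈ Q)
    (hq : q ∈ Q) (h : Reach1 T NNeg p u q v) :
    ∃ ρ ∈ shortSchemes T ((Q.card + tnorm1 T) ^ 5), ∃ π, InLang1 ρ π ∧ Run1 T NNeg p u q v π := by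
  obtain ⟨π, hπ⟩ := h
  have hreach : ReachIn T π.length (p, u) (q, v) := ⟨π, rfl, hπ⟩
  by_cases hup : u + (Q.card * tnorm1 T : ℕ) < v
  · exact exists_mem_shortSchemes_of_ascending hreach (fun t ht => (hT t ht).2) hp hup
  by_cases hdown : v + (Q.card * tnorm1 T : ℕ) < u
  · exact exists_mem_shortSchemes_of_descending hreach (fun t ht => (hT t ht).1) hq hdown
  exact exists_mem_shortSchemes_of_level hreach (fun t ht => (hT t ht).2) hp (by rw [abs_le]; omega)

end Schemes

/-- The reachability relation of any 1-VASS is captured by a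
finite set of linear path schemes of polynomial length with at most one cycle
each. -/
theorem statement10 :
    ∃ c : ℕ, ∀ (Q : Finset ℕ) (T : Finset Trans1),
      (∀ t ∈ T, t.1 ∈ Q ∧ t.2.2 ∈ Q) →
      ∃ Y : Finset LPS1,
        (∀ ρ ∈ Y, ∃ p q, IsLPSFrom1 T p q ρ) ∧
        (∀ p ∈ Q, ∀ q ∈ Q, ∀ u v : ℤ, 0 ≤ u → 0 ≤ v →
          (Reach1 T NNeg p u q v ↔ SReach1 T Y NNeg p u q v)) ∧
        (∀ ρ ∈ Y, lpsLen1 ρ ≤ (Q.card + tnorm1 T) ^ c) ∧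
        (∀ ρ ∈ Y, numCycles1 ρ ≤ 1) := by
  refine ⟨5, fun Q T hT => ?_⟩
  have hfinite := finite_shortSchemes T ((Q.card + tnorm1 T) ^ 5)
  refine ⟨hfinite.toFinset, fun ρ hρ => (hfinite.mem_toFinset.1 hρ).1, ?_,
    fun ρ hρ => (hfinite.mem_toFinset.1 hρ).2.1, fun ρ hρ => (hfinite.mem_toFinset.1 hρ).2.2⟩
  intro p hp q hq u v _ _
  constructor
  · intro h
    obtain ⟨ρ, hρ, hlang⟩ := exists_mem_shortSchemes_of_reach1 hT hp hq h
    exact ⟨ρ, hfinite.mem_toFinset.2 hρ, hlang⟩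
  · rintro ⟨-, -, π, -, hπ⟩
    exact ⟨π, hπ⟩

end VASS
end
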